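/- Let (x_i)_i be a normalized block sequence in X_iw. Then there exists an infinite set L ⊆ ℕ such that for every j_0 ∈ ℕ, every finite F ⊆ L for which (x_i)_{i∈F} is S_{n_{j_0}}-admissible, and all scalars (c_i)_{i∈F}, one has ‖Σ_{i∈F} c_i x_i‖ ≥ (1/(2 m_{j_0})) Σ_{i∈F} |c_i|. In particular, every normalized block sequence in X_iw has a subsequence that generates a spreading model that is 4-equivalent to the unit vector basis of ℓ1. -/

import Mathlib

/-!
The lower estimate. Let `x` be a normalized block sequence. The norm of each `x i` is attained by
a functional `f i` of the norming set supported in the support of `x i` (`exists_norming`): the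
nonzero coordinates of members of the norming set are reciprocals of integers, so a pointwise limit
of a maximizing sequence agrees on a finite set with a restriction of one of its members, and the
norming set is closed under restrictions and changes of signs (`WIW.smul_sign`).

If the weights of the `f i` are unbounded, a subsequence of `(f i)` is very fast growing, and for an
`S_{n_{j₀}}`-admissible set `F` the functional `m_{j₀}⁻¹ ∑_{i ∈ F} f i` belongs to the norming set
(`lower_of_weights`). Otherwise infinitely many `f i` share the same weight `p` and the same Schreier
index `s`. Dropping the first summand of `f i` leaves a functional `g i` that is at least
`1 - 1/p ≥ 1/2` on `x i`, and the weights of the remaining summands exceed the supports of all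
earlier vectors. Hence all remaining summands, for `i ∈ F`, form a very fast growing sequence; by the
convolution property of the Schreier families (`schreier_conv`) it is `S_{n_{j₀} + s}`-admissible, so
that `m_{j₀}⁻¹ ∑_{i ∈ F} g i` belongs to the norming set (`lower_of_const`). This is the point where
vector weights of arbitrary length are used.
In both cases signs are adjusted on the disjoint supports to obtain the `ℓ₁` estimate
(`lower_of_functional`).

The spreading model. A subsequence generating a spreading model exists by the argument of Brunel and
Sucheston, with Ramsey's theorem replaced by iterated limits along an ultrafilter
(`exists_spreadingModel`). The seminorms of the spreading model are at most the `ℓ₁` norm because the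
sequence is normalized, and at least a quarter of it by the lower estimate for `m 0 = 2`, `n 0 = 1`,
since all sufficiently far out `m`-tuples are `S_1`-admissible (`normFamEquiv_of_lower`).
-/

open Filter Topology
open scoped ENNReal

noncomputable section

/-! ### Abstract Banach space notions -/

section Abstract

variable {X : Type*} [NormedAddCommGroup X] [NormedSpace ℝ X]

/-- A sequence is normalized if every term has norm one. -/
def Normalized (x : ℕ → X) : Prop := ∀ i, ‖x i‖ = 1

/-- A sequence is weakly null if it tends to `0` in the weak topology. -/
def WeaklyNull (x : ℕ → X) : Prop :=
  ∀ f : X →L[ℝ] ℝ, Tendsto (fun i => f (x i)) atTop (𝓝 (0 : ℝ))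

end Abstract

/-- The ℓ₁ norm of finite coefficient vectors (the norms of finite linear
combinations of the unit vector basis of ℓ₁). -/
def l1Norm : ∀ m : ℕ, (Fin m → ℝ) → ℝ := fun _ a => ∑ i, |a i|

/-- The sup norm of finite coefficient vectors (the norms of finite linear
combinations of the unit vector basis of c₀). -/
def supNorm : ∀ m : ℕ, (Fin m → ℝ) → ℝ := fun _ a => ⨆ i, |a i|

/-- The ℓ_p norm of finite coefficient vectors, `1 ≤ p < ∞`. -/
def lpNormFin (p : ℝ) : ∀ m : ℕ, (Fin m → ℝ) → ℝ := fun _ a => (∑ i, |a i| ^ p) ^ (1 / p)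

/-- The ℓ_q norms of finite coefficient vectors, `q ∈ [1,∞]`, where `q = ∞`
corresponds to `c₀`. -/
def finLqNorm (q : ℝ≥0∞) : ∀ m : ℕ, (Fin m → ℝ) → ℝ := fun m a =>
  if q = ⊤ then supNorm m a else lpNormFin q.toReal m a

/-- The family of seminorms `ν` (of finite combinations of a sequence in a seminormed
space) is `C`-equivalent to the family `μ`:  there are `A B > 0` with `A * B ≤ C` and
`(1/A) * μ ≤ ν ≤ B * μ`. -/
def NormFamEquiv (C : ℝ) (μ ν : ∀ m : ℕ, (Fin m → ℝ) → ℝ) : Prop :=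
  ∃ A B : ℝ, 0 < A ∧ 0 < B ∧ A * B ≤ C ∧
    ∀ (m : ℕ) (a : Fin m → ℝ), (1 / A) * μ m a ≤ ν m a ∧ ν m a ≤ B * μ m a

section Abstract2

variable {X : Type*} [NormedAddCommGroup X] [NormedSpace ℝ X]

/-- The sequence `x` generates the spreading model whose finite-combination
seminorms are given by the family `ν`. -/
def GeneratesSpreadingModel (x : ℕ → X) (ν : ∀ m : ℕ, (Fin m → ℝ) → ℝ) : Prop :=
  ∀ (m : ℕ) (a : Fin m → ℝ), ∀ ε > (0 : ℝ), ∃ N : ℕ, ∀ j : Fin m → ℕ,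
    StrictMono j → (∀ i, N ≤ j i) → |‖∑ i, a i • x (j i)‖ - ν m a| < ε

/-- The array of sequences `A` (row `A i` is the `i`-th sequence) generates the
asymptotic model whose finite-combination seminorms are given by `ν`. -/
def GeneratesAsymptoticModel (A : ℕ → ℕ → X) (ν : ∀ l : ℕ, (Fin l → ℝ) → ℝ) : Prop :=
  ∀ (l : ℕ) (a : Fin l → ℝ), ∀ ε > (0 : ℝ), ∃ N : ℕ, ∀ j : Fin l → ℕ,
    StrictMono j → (∀ i, N ≤ j i) → |‖∑ i, a i • A i (j i)‖ - ν l a| < ε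

/-- `e` is a Schauder basis of `X`. -/
def IsSchauderBasis (e : ℕ → X) : Prop :=
  ∀ x : X, ∃! a : ℕ → ℝ,
    Tendsto (fun n => ∑ i ∈ Finset.range n, a i • e i) atTop (𝓝 x)

/-- The basis `e` is 1-unconditional. -/
def OneUnconditional (e : ℕ → X) : Prop :=
  ∀ (F : Finset ℕ) (a ε : ℕ → ℝ), (∀ i, ε i = 1 ∨ ε i = -1) →
    ‖∑ i ∈ F, (ε i * a i) • e i‖ = ‖∑ i ∈ F, a i • e i‖

/-- `x` is a block sequence with respect to the basis `e`. -/
def IsBlockSeq (e : ℕ → X) (x : ℕ → X) : Prop :=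
  ∃ F : ℕ → Finset ℕ, (∀ k, (F k).Nonempty) ∧
    (∀ k l : ℕ, k < l → ∀ i ∈ F k, ∀ j ∈ F l, i < j) ∧
    ∀ k, x k ≠ 0 ∧ x k ∈ Submodule.span ℝ (e '' ↑(F k))

/-- `z` is a finite block sequence with respect to the basis `e`. -/
def IsFinBlockSeq (e : ℕ → X) {n : ℕ} (z : Fin n → X) : Prop :=
  ∃ F : Fin n → Finset ℕ, (∀ k, (F k).Nonempty) ∧
    (∀ k l : Fin n, k < l → ∀ i ∈ F k, ∀ j ∈ F l, i < j) ∧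
    ∀ k, z k ≠ 0 ∧ z k ∈ Submodule.span ℝ (e '' ↑(F k))

/-- `Y` is a block subspace of `X` (with respect to the basis `e`): the closed
linear span of an infinite normalized block sequence. -/
def IsBlockSubspace (e : ℕ → X) (Y : Set X) : Prop :=
  ∃ y : ℕ → X, IsBlockSeq e y ∧ Normalized y ∧
    Y = closure (↑(Submodule.span ℝ (Set.range y)) : Set X)

/-- The finite sequence `z` is `C`-equivalent to a finite basic sequence whose
finite-combination norms are given by `μ`. -/
def FinSeqEquiv (C : ℝ) {n : ℕ} (μ : (Fin n → ℝ) → ℝ) (z : Fin n → X) : Prop :=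
  ∃ A B : ℝ, 0 < A ∧ 0 < B ∧ A * B ≤ C ∧
    ∀ a : Fin n → ℝ, (1 / A) * μ a ≤ ‖∑ i, a i • z i‖ ∧ ‖∑ i, a i • z i‖ ≤ B * μ a

/-- The finite basic sequence with combination norms `μ` is block representable
in `Y ⊆ X`. -/
def BlockRepresentableIn (e : ℕ → X) (Y : Set X) {n : ℕ} (μ : (Fin n → ℝ) → ℝ) : Prop :=
  ∀ ε > (0 : ℝ), ∃ z : Fin n → X, (∀ i, z i ∈ Y) ∧ IsFinBlockSeq e z ∧
    FinSeqEquiv (1 + ε) μ z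

/-- `x` is a (Schauder) basic sequence. -/
def IsBasicSeq (x : ℕ → X) : Prop :=
  (∀ i, x i ≠ 0) ∧ ∃ K : ℝ, 0 < K ∧ ∀ (a : ℕ → ℝ) (m n : ℕ), m ≤ n →
    ‖∑ i ∈ Finset.range m, a i • x i‖ ≤ K * ‖∑ i ∈ Finset.range n, a i • x i‖

end Abstract2

/-- A plegma of `k` strictly increasing `l`-tuples of naturals. -/
def IsPlegma (k l : ℕ) (s : Fin k → Fin l → ℕ) : Prop :=
  (∀ i, StrictMono (s i)) ∧
  (∀ i₁ i₂ : Fin k, ∀ j₁ j₂ : Fin l, j₁ < j₂ → s i₁ j₁ < s i₂ j₂) ∧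
  (∀ i₁ i₂ : Fin k, i₁ < i₂ → ∀ j, s i₁ j ≤ s i₂ j)

/-- A strict plegma: a plegma with pairwise disjoint tuples. -/
def IsStrictPlegma (k l : ℕ) (s : Fin k → Fin l → ℕ) : Prop :=
  IsPlegma k l s ∧ ∀ i₁ i₂ : Fin k, i₁ ≠ i₂ → ∀ j₁ j₂ : Fin l, s i₁ j₁ ≠ s i₂ j₂

section Abstract3

variable {X : Type*} [NormedAddCommGroup X] [NormedSpace ℝ X]

/-- The `l`-array `x` generates the joint spreading model with finite-combination
seminorms `ν`. -/
def GeneratesJSM (l : ℕ) (x : Fin l → ℕ → X)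
    (ν : ∀ k : ℕ, (Fin l → Fin k → ℝ) → ℝ) : Prop :=
  ∀ (k : ℕ) (a : Fin l → Fin k → ℝ), ∀ ε > (0 : ℝ), ∃ N : ℕ,
    ∀ s : Fin l → Fin k → ℕ, IsStrictPlegma l k s → (∀ i j, N ≤ s i j) →
      |‖∑ i, ∑ j, a i j • x i (s i j)‖ - ν k a| < ε

/-- `X` admits a unique joint spreading model with respect to the family of
sequences `F`. -/
def UniqueJSM (F : Set (ℕ → X)) : Prop :=
  ∃ C : ℝ, 1 ≤ C ∧ ∀ (l : ℕ) (x y : Fin l → ℕ → X),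
    (∀ i, x i ∈ F) → (∀ i, y i ∈ F) →
    ∀ ν μ, GeneratesJSM l x ν → GeneratesJSM l y μ →
      ∃ A B : ℝ, 0 < A ∧ 0 < B ∧ A * B ≤ C ∧
        ∀ (k : ℕ) (a : Fin l → Fin k → ℝ),
          (1 / A) * μ k a ≤ ν k a ∧ ν k a ≤ B * μ k a

/-- `X` admits a unique asymptotic model with respect to the family of
sequences `F`. -/
def UniqueAM (F : Set (ℕ → X)) : Prop :=
  ∀ x y : ℕ → ℕ → X, (∀ i, x i ∈ F) → (∀ i, y i ∈ F) →
    ∀ ν μ, GeneratesAsymptoticModel x ν → GeneratesAsymptoticModel y μ →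
      ∃ C : ℝ, 1 ≤ C ∧ NormFamEquiv C μ ν

end Abstract3

/-- A bundled Banach-space candidate. -/
structure BanachPkg : Type 1 where
  X : Type
  [grp : NormedAddCommGroup X]
  [mod : NormedSpace ℝ X]

attribute [instance] BanachPkg.grp BanachPkg.mod

/-! ### c₀₀ and the norming sets -/

/-- The finitely supported real sequences. -/
abbrev c00 : Type := ℕ →₀ ℝ

/-- Minimum of the support (0 for the zero vector). -/
def minSupp (x : c00) : ℕ := if h : x.support.Nonempty then x.support.min' h else 0

/-- Maximum of the support (0 for the zero vector). -/
def maxSupp (x : c00) : ℕ := if h : x.support.Nonempty then x.support.max' h else 0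

/-- Minimum of a finset of naturals (0 if empty). -/
def finsetMin (F : Finset ℕ) : ℕ := if h : F.Nonempty then F.min' h else 0

/-- `x < y` as successive (block) vectors. -/
def Blocks (x y : c00) : Prop := maxSupp x < minSupp y

/-- The Schreier families. -/
def Schreier : ℕ → Set (Finset ℕ)
  | 0 => {F | ∃ i : ℕ, F = {i}}
  | n + 1 => {F | ∃ (d : ℕ) (G : Fin d → Finset ℕ),
      (∀ k, G k ∈ Schreier n) ∧
      (∀ k l : Fin d, k < l → ∀ i ∈ G k, ∀ j ∈ G l, i < j) ∧
      (∀ i ∈ F, d ≤ i) ∧ F = Finset.univ.biUnion G}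

/-- The family `A_m` of sets of cardinality at most `m`. -/
def SchreierA (m : ℕ) : Set (Finset ℕ) := {F | F.card ≤ m}

/-- The operation `A * B` on families of finite sets. -/
def famStar (A B : Set (Finset ℕ)) : Set (Finset ℕ) :=
  {F | ∃ (d : ℕ) (G : Fin d → Finset ℕ),
      (∀ k, G k ∈ B) ∧ (∀ k, (G k).Nonempty) ∧
      (∀ k l : Fin d, k < l → ∀ i ∈ G k, ∀ j ∈ G l, i < j) ∧
      (Finset.univ.image fun k => finsetMin (G k)) ∈ A ∧ F = Finset.univ.biUnion G}

/-- A finite block sequence in `c00` is `S`-admissible. -/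
def Admissible (S : Set (Finset ℕ)) {d : ℕ} (f : Fin d → c00) : Prop :=
  (∀ q, (f q).support.Nonempty) ∧
  (∀ q r : Fin d, q < r → Blocks (f q) (f r)) ∧
  (Finset.univ.image fun q => minSupp (f q)) ∈ S

/-- The two fixed sequences `(m_j)`, `(n_j)` (indexed here starting at `0`, so that
`m 0` plays the role of `m_1` etc.) together with their growth conditions. -/
structure IWParams where
  m : ℕ → ℕ
  n : ℕ → ℕ
  m_mono : StrictMono m
  n_mono : StrictMono n
  m_first : m 0 = 2
  n_first : n 0 = 1
  growth_exp : ∀ C : ℝ, 1 < C → Tendsto (fun j => C ^ (n j) / (m j : ℝ)) atTop atTop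
  growth_ratio : Tendsto (fun j => (m j : ℝ) / (m (j + 1) : ℝ)) atTop (𝓝 0)
  growth_sum : ∀ (l : ℕ) (js : Fin l → ℕ) (j : ℕ), (∀ i, js i ≤ j) →
    (∏ i, m (js i)) < m (j + 1) ^ 2 → (∑ i, n (js i)) + 1 < n (j + 1)

/-- The action of a functional `f ∈ c00` on a vector `x ∈ c00`. -/
def evalPair (f x : c00) : ℝ := f.sum fun i a => a * x i

/-- The norming set `W_iw`, together with admissible weights: `WIW P f w` means
that `f` belongs to the norming set and `w` is a weight of (one representation of)
`f`; the unit functionals `±e_i^*` have weight `∞`. -/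
inductive WIW (P : IWParams) : c00 → ℕ∞ → Prop
  | unit (i : ℕ) (s : ℝ) (hs : s = 1 ∨ s = -1) : WIW P (Finsupp.single i s) ⊤
  | op (l : ℕ) (hl : 0 < l) (js : Fin l → ℕ) (d : ℕ) (f : Fin d → c00) (w : Fin d → ℕ∞)
      (hf : ∀ q, WIW P (f q) (w q))
      (hadm : Admissible (Schreier (∑ i, P.n (js i))) f)
      (hvfg : ∀ q r : Fin d, (q : ℕ) + 1 = (r : ℕ) → (maxSupp (f q) : ℕ∞) < w r) :
      WIW P (((∏ i, P.m (js i) : ℕ) : ℝ)⁻¹ • ∑ q, f q) ((∏ i, P.m (js i) : ℕ) : ℕ∞)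

/-- Membership in the norming set `W_iw`. -/
def memWIW (P : IWParams) (f : c00) : Prop := ∃ w, WIW P f w

/-- The norm of `X_iw`, on finitely supported vectors. -/
def iwNorm (P : IWParams) (x : c00) : ℝ :=
  sSup {r | ∃ f, memWIW P f ∧ r = evalPair f x}

/-- The dual norm of a finitely supported functional, as an element of `X_iw^*`. -/
def iwDualNorm (P : IWParams) (f : c00) : ℝ :=
  sSup {r | ∃ x : c00, iwNorm P x ≤ 1 ∧ r = evalPair f x}

/-- The auxiliary norming set `W_aux^N` together with admissible weights. -/
inductive WAux (P : IWParams) (N : ℕ) : c00 → ℕ∞ → Prop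
  | unit (i : ℕ) (s : ℝ) (hs : s = 1 ∨ s = -1) : WAux P N (Finsupp.single i s) ⊤
  | op (l : ℕ) (hl : 0 < l) (js : Fin l → ℕ) (d : ℕ) (f : Fin d → c00) (w : Fin d → ℕ∞)
      (hf : ∀ q, WAux P N (f q) (w q))
      (hadm : Admissible (famStar (Schreier (∑ i, P.n (js i))) (SchreierA 3)) f)
      (hlarge : ∀ q : Fin d, 0 < (q : ℕ) → (N : ℕ∞) < w q) :
      WAux P N (((∏ i, P.m (js i) : ℕ) : ℝ)⁻¹ • ∑ q, f q) ((∏ i, P.m (js i) : ℕ) : ℕ∞)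

/-- An `(n, ε)` basic special convex combination. -/
def IsBasicSCC (n : ℕ) (ε : ℝ) (x : c00) : Prop :=
  ∃ F : Finset ℕ, x.support ⊆ F ∧ F ∈ Schreier n ∧ (∀ i, 0 ≤ x i) ∧
    (∑ i ∈ F, x i) = 1 ∧ ∀ G ⊆ F, G ∈ Schreier (n - 1) → (∑ i ∈ G, x i) < ε

/-- An `(n, ε)` special convex combination `∑ c i • x i`. -/
def IsSCC (n : ℕ) (ε : ℝ) {m : ℕ} (c : Fin m → ℝ) (x : Fin m → c00) : Prop :=
  (∀ i, (x i).support.Nonempty) ∧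
  (∀ i j : Fin m, i < j → Blocks (x i) (x j)) ∧
  IsBasicSCC n ε (∑ i, c i • Finsupp.single (minSupp (x i)) (1 : ℝ))

/-- `x` generates, with respect to the norm function `Nrm` on `c00`, the spreading
model whose finite-combination seminorms are `ν`. -/
def GeneratesSMwith (Nrm : c00 → ℝ) (x : ℕ → c00) (ν : ∀ m : ℕ, (Fin m → ℝ) → ℝ) : Prop :=
  ∀ (m : ℕ) (a : Fin m → ℝ), ∀ ε > (0 : ℝ), ∃ N : ℕ, ∀ j : Fin m → ℕ,
    StrictMono j → (∀ i, N ≤ j i) → |Nrm (∑ i, a i • x (j i)) - ν m a| < ε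

/-- The array `A` generates, with respect to the norm function `Nrm` on `c00`, the
asymptotic model whose finite-combination seminorms are `ν`. -/
def GeneratesAMwith (Nrm : c00 → ℝ) (A : ℕ → ℕ → c00) (ν : ∀ l : ℕ, (Fin l → ℝ) → ℝ) : Prop :=
  ∀ (l : ℕ) (a : Fin l → ℝ), ∀ ε > (0 : ℝ), ∃ N : ℕ, ∀ j : Fin l → ℕ,
    StrictMono j → (∀ i, N ≤ j i) → |Nrm (∑ i, a i • A i (j i)) - ν l a| < ε

/-- A normalized block sequence in `c00` with respect to a norm function. -/
def IsNormBlockSeq (Nrm : c00 → ℝ) (y : ℕ → c00) : Prop :=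
  (∀ k, (y k).support.Nonempty) ∧ (∀ k, Blocks (y k) (y (k + 1))) ∧ ∀ k, Nrm (y k) = 1

/-- A `(C, (j_i)_{i ∈ I})` rapidly increasing sequence, `I` a (finite) interval. -/
def IsRIS (P : IWParams) (C : ℝ) (I : Finset ℕ) (j : ℕ → ℕ) (x : ℕ → c00) : Prop :=
  (∀ a ∈ I, ∀ b ∈ I, ∀ c : ℕ, a ≤ c → c ≤ b → c ∈ I) ∧
  (∀ a ∈ I, ∀ b ∈ I, a < b → j a < j b) ∧
  (∀ i ∈ I, (x i).support.Nonempty) ∧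
  (∀ a ∈ I, ∀ b ∈ I, a < b → Blocks (x a) (x b)) ∧
  (∀ i ∈ I, iwNorm P (x i) ≤ C) ∧
  (∀ i ∈ I, ∀ i' ∈ I, i' + 1 = i → (maxSupp (x i') : ℝ) < Real.sqrt (P.m (j i))) ∧
  (∀ i ∈ I, ∀ f w, WIW P f w → w < ((P.m (j i) : ℕ) : ℕ∞) →
    |evalPair f (x i)| ≤ C / (w.toNat : ℝ))

/-- An infinite `(C, (j_i)_i)` rapidly increasing sequence. -/
def IsRISNat (P : IWParams) (C : ℝ) (j : ℕ → ℕ) (x : ℕ → c00) : Prop :=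
  StrictMono j ∧ (∀ i, (x i).support.Nonempty) ∧ (∀ i, Blocks (x i) (x (i + 1))) ∧
  (∀ i, iwNorm P (x i) ≤ C) ∧
  (∀ i, (maxSupp (x i) : ℝ) < Real.sqrt (P.m (j (i + 1)))) ∧
  (∀ i, ∀ f w, WIW P f w → w < ((P.m (j i) : ℕ) : ℕ∞) →
    |evalPair f (x i)| ≤ C / (w.toNat : ℝ))

/-- `X` together with the basis `e` is a realization of the space `X_iw`: a Banach
space in which `c00` sits isometrically (w.r.t. `iwNorm`) and densely. -/
structure IsIWRealization (P : IWParams) (X : Type*) [NormedAddCommGroup X]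
    [NormedSpace ℝ X] (e : ℕ → X) : Prop where
  complete : CompleteSpace X
  dense : DenseRange fun a : c00 => ∑ i ∈ a.support, a i • e i
  norm_eq : ∀ a : c00, ‖∑ i ∈ a.support, a i • e i‖ = iwNorm P a

/-- The conjugate exponent of `p`. -/
def conjExp (p : ℝ) : ℝ := p / (p - 1)

/-- The norming set `W_iw^p` together with admissible weights. -/
inductive WIWp (P : IWParams) (p : ℝ) : c00 → ℕ∞ → Prop
  | unit (i : ℕ) (s : ℝ) (hs : s = 1 ∨ s = -1) : WIWp P p (Finsupp.single i s) ⊤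
  | op (l : ℕ) (hl : 0 < l) (js : Fin l → ℕ) (d : ℕ) (f : Fin d → c00) (w : Fin d → ℕ∞)
      (lam : Fin d → ℝ) (hlam : (∑ q, |lam q| ^ conjExp p) ≤ 1)
      (hf : ∀ q, WIWp P p (f q) (w q))
      (hadm : Admissible (Schreier (∑ i, P.n (js i))) f)
      (hvfg : ∀ q r : Fin d, (q : ℕ) + 1 = (r : ℕ) → (maxSupp (f q) : ℕ∞) < w r) :
      WIWp P p (((∏ i, P.m (js i) : ℕ) : ℝ)⁻¹ • ∑ q, lam q • f q)
        ((∏ i, P.m (js i) : ℕ) : ℕ∞)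

/-- The norm of `X_iw^p` on finitely supported vectors. -/
def iwpNorm (P : IWParams) (p : ℝ) (x : c00) : ℝ :=
  sSup {r | ∃ f, (∃ w, WIWp P p f w) ∧ r = evalPair f x}

/-- The norming set of the space `X̃_iw`, together with admissible weights. -/
inductive WT (P : IWParams) : c00 → ℕ∞ → Prop
  | unit (i : ℕ) (s : ℝ) (hs : s = 1 ∨ s = -1) : WT P (Finsupp.single i s) ⊤
  | op (j : ℕ) (d : ℕ) (f : Fin d → c00) (w : Fin d → ℕ∞)
      (hf : ∀ q, WT P (f q) (w q))
      (hadm : Admissible (Schreier (P.n j)) f)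
      (hvfg : ∀ q r : Fin d, (q : ℕ) + 1 = (r : ℕ) → (maxSupp (f q) : ℕ∞) < w r) :
      WT P ((P.m j : ℝ)⁻¹ • ∑ q, f q) ((P.m j : ℕ) : ℕ∞)

/-- The norm of `X̃_iw` on finitely supported vectors. -/
def tNorm (P : IWParams) (x : c00) : ℝ :=
  sSup {r | ∃ f, (∃ w, WT P f w) ∧ r = evalPair f x}

end

/-! ### Schreier families -/

/-- Schreier families are hereditary and spreading: if the points `a q` lie in a set of
`Schreier n`, and `b` moves them to the right without changing their relative order, then the
moved points form a set of `Schreier n`. The side condition excludes the empty subset of a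
member of `Schreier 0`. -/
lemma schreier_spread {ι : Type*} (a b : ι → ℕ) :
    ∀ (n : ℕ) (F : Finset ℕ) (K : Finset ι), F ∈ Schreier n → (∀ q ∈ K, a q ∈ F) →
      (∀ q ∈ K, a q ≤ b q) → (∀ q ∈ K, ∀ r ∈ K, (a q < a r ↔ b q < b r)) →
      (K.Nonempty ∨ 1 ≤ n) → K.image b ∈ Schreier n := by
  classical
  intro n
  induction n with
  | zero =>
    intro F K hF ha hab hord hK
    obtain ⟨i, rfl⟩ := hF
    rcases hK with ⟨q, hq⟩ | h
    · refine ⟨b q, ?_⟩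
      ext k
      simp only [Finset.mem_image, Finset.mem_singleton]
      constructor
      · rintro ⟨r, hr, rfl⟩
        have h1 := Finset.mem_singleton.1 (ha q hq)
        have h2 := Finset.mem_singleton.1 (ha r hr)
        have h3 := hord q hq r hr
        have h4 := hord r hr q hq
        omega
      · rintro rfl
        exact ⟨q, hq, rfl⟩
    · omega
  | succ n ih =>
    intro F K hF ha hab hord _
    obtain ⟨d, G, hG, hGord, hd, rfl⟩ := hF
    -- only the pieces of the decomposition that are hit by `a` are kept
    set D : Finset (Fin d) := Finset.univ.filter fun k => ∃ q ∈ K, a q ∈ G k with hD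
    have hDcard : D.card ≤ d := by simpa using Finset.card_le_univ D
    refine ⟨D.card, fun k => (K.filter fun q => a q ∈ G (D.orderEmbOfFin rfl k)).image b,
      ?_, ?_, ?_, ?_⟩
    · intro k
      refine ih (G (D.orderEmbOfFin rfl k)) _ (hG _) ?_ ?_ ?_ ?_
      · intro q hq; exact (Finset.mem_filter.1 hq).2
      · intro q hq; exact hab q (Finset.mem_filter.1 hq).1
      · intro q hq r hr
        exact hord q (Finset.mem_filter.1 hq).1 r (Finset.mem_filter.1 hr).1
      · left
        have := Finset.orderEmbOfFin_mem D rfl k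
        obtain ⟨q, hq, hq2⟩ := (Finset.mem_filter.1 this).2
        exact ⟨q, Finset.mem_filter.2 ⟨hq, hq2⟩⟩
    · intro k l hkl i hi j hj
      obtain ⟨q, hq, rfl⟩ := Finset.mem_image.1 hi
      obtain ⟨r, hr, rfl⟩ := Finset.mem_image.1 hj
      rw [Finset.mem_filter] at hq hr
      refine (hord q hq.1 r hr.1).1 (hGord _ _ ?_ _ hq.2 _ hr.2)
      exact (D.orderEmbOfFin rfl).strictMono hkl
    · intro i hi
      obtain ⟨q, hq, rfl⟩ := Finset.mem_image.1 hi
      exact hDcard.trans ((hd _ (ha q hq)).trans (hab q hq))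
    · ext i
      simp only [Finset.mem_image, Finset.mem_biUnion, Finset.mem_univ, true_and,
        Finset.mem_filter]
      constructor
      · rintro ⟨q, hq, rfl⟩
        obtain ⟨k, _, hk⟩ := Finset.mem_biUnion.1 (ha q hq)
        have hkD : k ∈ D := by
          rw [hD, Finset.mem_filter]; exact ⟨Finset.mem_univ _, q, hq, hk⟩
        have : k ∈ Set.range (D.orderEmbOfFin rfl) := by
          rw [Finset.range_orderEmbOfFin]; exact hkD
        obtain ⟨k', rfl⟩ := this
        exact ⟨k', q, ⟨hq, hk⟩, rfl⟩
      · rintro ⟨k, q, ⟨hq, _⟩, rfl⟩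
        exact ⟨q, hq, rfl⟩

/-- The convolution property of the Schreier families: successive sets of `Schreier s`
attached to the points of a set of `Schreier n` have their union in `Schreier (n + s)`. -/
lemma schreier_conv {ι : Type*} (a : ι → ℕ) (G : ι → Finset ℕ) (s : ℕ) :
    ∀ (n : ℕ) (F : Finset ι), F.image a ∈ Schreier n → (∀ i ∈ F, G i ∈ Schreier s) →
      (Set.InjOn a F) → (∀ i ∈ F, ∀ k ∈ G i, a i ≤ k) →
      (∀ i ∈ F, ∀ j ∈ F, a i < a j → ∀ k ∈ G i, ∀ l ∈ G j, k < l) →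
      F.biUnion G ∈ Schreier (n + s) := by
  classical
  intro n
  induction n with
  | zero =>
    intro F hF hG hinj _ _
    obtain ⟨k, hk⟩ := hF
    have h1 : F.card = 1 := by
      rw [← Finset.card_image_of_injOn hinj, hk, Finset.card_singleton]
    obtain ⟨i, rfl⟩ := Finset.card_eq_one.1 h1
    simpa using hG i (by simp)
  | succ n ih =>
    intro F hF hG hinj hle hord
    obtain ⟨d, H, hH, hHord, hd, hFH⟩ := hF
    rw [show n + 1 + s = (n + s) + 1 by omega]
    have hmemF : ∀ k, ∀ i ∈ H k, i ∈ F.image a := by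
      intro k i hi
      rw [hFH]; exact Finset.mem_biUnion.2 ⟨k, Finset.mem_univ _, hi⟩
    refine ⟨d, fun k => (F.filter fun i => a i ∈ H k).biUnion G, ?_, ?_, ?_, ?_⟩
    · intro k
      refine ih _ ?_ ?_ ?_ ?_ ?_
      · convert hH k using 1
        ext t
        simp only [Finset.mem_image, Finset.mem_filter]
        constructor
        · rintro ⟨i, ⟨_, h⟩, rfl⟩; exact h
        · intro ht
          obtain ⟨i, hi, rfl⟩ := Finset.mem_image.1 (hmemF k t ht)
          exact ⟨i, ⟨hi, ht⟩, rfl⟩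
      · intro i hi; exact hG i (Finset.mem_filter.1 hi).1
      · intro i hi j hj h
        exact hinj (Finset.mem_filter.1 hi).1 (Finset.mem_filter.1 hj).1 h
      · intro i hi; exact hle i (Finset.mem_filter.1 hi).1
      · intro i hi j hj; exact hord i (Finset.mem_filter.1 hi).1 j (Finset.mem_filter.1 hj).1
    · intro k l hkl t ht u hu
      obtain ⟨i, hi, hti⟩ := Finset.mem_biUnion.1 ht
      obtain ⟨j, hj, huj⟩ := Finset.mem_biUnion.1 hu
      rw [Finset.mem_filter] at hi hj
      exact hord i hi.1 j hj.1 (hHord k l hkl _ hi.2 _ hj.2) t hti u huj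
    · intro t ht
      obtain ⟨i, hi, hti⟩ := Finset.mem_biUnion.1 ht
      exact (hd _ (Finset.mem_image_of_mem a hi)).trans (hle i hi t hti)
    · ext t
      simp only [Finset.mem_biUnion, Finset.mem_univ, true_and, Finset.mem_filter]
      constructor
      · rintro ⟨i, hi, ht⟩
        have := Finset.mem_image_of_mem a hi
        rw [hFH] at this
        obtain ⟨k, _, hk⟩ := Finset.mem_biUnion.1 this
        exact ⟨k, i, ⟨hi, hk⟩, ht⟩
      · rintro ⟨k, i, ⟨hi, _⟩, ht⟩
        exact ⟨i, hi, ht⟩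

lemma schreier_one_of_card_le (F : Finset ℕ) (h : ∀ i ∈ F, F.card ≤ i) : F ∈ Schreier 1 := by
  classical
  refine ⟨F.card, fun k => {F.orderEmbOfFin rfl k}, fun k => ⟨_, rfl⟩, ?_, h, ?_⟩
  · intro k l hkl i hi j hj
    rw [Finset.mem_singleton] at hi hj
    rw [hi, hj]
    exact (F.orderEmbOfFin rfl).strictMono hkl
  · ext i
    have h1 : i ∈ (F : Set ℕ) ↔ ∃ k, F.orderEmbOfFin rfl k = i := by
      rw [← Finset.range_orderEmbOfFin F rfl]; rfl
    simpa [eq_comm] using h1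

/-! ### Supports -/

lemma minSupp_le_of_mem {f : c00} {k : ℕ} (h : f k ≠ 0) : minSupp f ≤ k := by
  have hk : k ∈ f.support := Finsupp.mem_support_iff.2 h
  rw [minSupp, dif_pos ⟨k, hk⟩]
  exact Finset.min'_le _ _ hk

lemma le_maxSupp_of_mem {f : c00} {k : ℕ} (h : f k ≠ 0) : k ≤ maxSupp f := by
  have hk : k ∈ f.support := Finsupp.mem_support_iff.2 h
  rw [maxSupp, dif_pos ⟨k, hk⟩]
  exact Finset.le_max' _ _ hk

lemma apply_minSupp_ne {f : c00} (h : f.support.Nonempty) : f (minSupp f) ≠ 0 := by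
  rw [minSupp, dif_pos h]
  exact Finsupp.mem_support_iff.1 (Finset.min'_mem _ h)

lemma apply_maxSupp_ne {f : c00} (h : f.support.Nonempty) : f (maxSupp f) ≠ 0 := by
  rw [maxSupp, dif_pos h]
  exact Finsupp.mem_support_iff.1 (Finset.max'_mem _ h)

lemma minSupp_le_maxSupp {f : c00} (h : f.support.Nonempty) : minSupp f ≤ maxSupp f :=
  minSupp_le_of_mem (apply_maxSupp_ne h)

lemma minSupp_mono {f g : c00} (hf : f.support.Nonempty) (h : ∀ k, f k ≠ 0 → g k ≠ 0) :
    minSupp g ≤ minSupp f := minSupp_le_of_mem (h _ (apply_minSupp_ne hf))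

lemma maxSupp_mono {f g : c00} (hf : f.support.Nonempty) (h : ∀ k, f k ≠ 0 → g k ≠ 0) :
    maxSupp f ≤ maxSupp g := le_maxSupp_of_mem (h _ (apply_maxSupp_ne hf))

lemma Blocks.mono {f g f' g' : c00} (hb : Blocks f g) (hf : f'.support.Nonempty)
    (hg : g'.support.Nonempty) (h : ∀ k, f' k ≠ 0 → f k ≠ 0) (h' : ∀ k, g' k ≠ 0 → g k ≠ 0) :
    Blocks f' g' :=
  ((maxSupp_mono hf h).trans_lt hb).trans_le (minSupp_mono hg h')

lemma Blocks.disjoint {f g : c00} (hb : Blocks f g) {k : ℕ} (hf : f k ≠ 0) : g k = 0 := by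
  by_contra hg
  exact absurd ((le_maxSupp_of_mem hf).trans_lt hb) (not_lt.2 (minSupp_le_of_mem hg))

/-! ### The norming set -/

lemma one_le_n (P : IWParams) (j : ℕ) : 1 ≤ P.n j := by
  have := P.n_mono.monotone (Nat.zero_le j)
  rwa [P.n_first] at this

lemma two_le_m (P : IWParams) (j : ℕ) : 2 ≤ P.m j := by
  have := P.m_mono.monotone (Nat.zero_le j)
  rwa [P.m_first] at this

lemma one_le_sum_n (P : IWParams) {l : ℕ} (hl : 0 < l) (js : Fin l → ℕ) :
    1 ≤ ∑ i, P.n (js i) :=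
  (one_le_n P (js ⟨0, hl⟩)).trans
    (Finset.single_le_sum (f := fun i => P.n (js i)) (fun _ _ => Nat.zero_le _)
      (Finset.mem_univ _))

lemma m_le_prod_m (P : IWParams) {l : ℕ} (js : Fin l → ℕ) (i : Fin l) :
    P.m (js i) ≤ ∏ i, P.m (js i) := by
  refine Finset.single_le_prod' (f := fun i => P.m (js i)) (fun i _ => ?_) (Finset.mem_univ i)
  exact (by norm_num : 1 ≤ 2).trans (two_le_m P _)

lemma two_le_prod_m (P : IWParams) {l : ℕ} (hl : 0 < l) (js : Fin l → ℕ) :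
    2 ≤ ∏ i, P.m (js i) :=
  (two_le_m P _).trans (m_le_prod_m P js ⟨0, hl⟩)

/-- The weighted-functional operation for families indexed by an arbitrary finite set, whose
members are only required to be pairwise successive in one of the two orders. The very fast
growing condition is asked for all pairs instead of consecutive ones. -/
lemma WIW.op_finset (P : IWParams) {ι : Type*} (K : Finset ι) (g : ι → c00) (w : ι → ℕ∞)
    (l : ℕ) (hl : 0 < l) (js : Fin l → ℕ) (hg : ∀ q ∈ K, WIW P (g q) (w q))
    (hne : ∀ q ∈ K, (g q).support.Nonempty)
    (hb : ∀ q ∈ K, ∀ r ∈ K, q ≠ r → Blocks (g q) (g r) ∨ Blocks (g r) (g q))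
    (hS : (K.image fun q => minSupp (g q)) ∈ Schreier (∑ i, P.n (js i)))
    (hv : ∀ q ∈ K, ∀ r ∈ K, Blocks (g q) (g r) → (maxSupp (g q) : ℕ∞) < w r) :
    WIW P (((∏ i, P.m (js i) : ℕ) : ℝ)⁻¹ • ∑ q ∈ K, g q) ((∏ i, P.m (js i) : ℕ) : ℕ∞) := by
  classical
  set key : ι → ℕ := fun q => minSupp (g q) with hkey
  have hinj : Set.InjOn key K := by
    intro q hq r hr h
    by_contra hqr
    have h1 := minSupp_le_maxSupp (hne q hq)
    have h2 := minSupp_le_maxSupp (hne r hr)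
    simp only [hkey] at h
    rcases hb q hq r hr hqr with h3 | h3 <;> unfold Blocks at h3 <;> omega
  have hlt : ∀ q ∈ K, ∀ r ∈ K, key q < key r → Blocks (g q) (g r) := by
    intro q hq r hr h
    have hqr : q ≠ r := by rintro rfl; exact lt_irrefl _ h
    have h1 := minSupp_le_maxSupp (hne q hq)
    have h2 := minSupp_le_maxSupp (hne r hr)
    rcases hb q hq r hr hqr with h3 | h3
    · exact h3
    · simp only [hkey] at h; unfold Blocks at h3; omega
  set s : Finset ℕ := K.image key with hs
  have hmem : ∀ t : Fin s.card, ∃ q ∈ K, key q = s.orderEmbOfFin rfl t := fun t =>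
    Finset.mem_image.1 (Finset.orderEmbOfFin_mem s rfl t)
  choose e heK he using hmem
  have hemono : ∀ t u, t < u → key (e t) < key (e u) := by
    intro t u htu
    rw [he, he]
    exact (s.orderEmbOfFin rfl).strictMono htu
  have heinj : Function.Injective e := by
    intro t u h
    rcases lt_trichotomy t u with h1 | h1 | h1
    · have := hemono _ _ h1; rw [h] at this; exact absurd this (lt_irrefl _)
    · exact h1
    · have := hemono _ _ h1; rw [h] at this; exact absurd this (lt_irrefl _)
  have himg : Finset.univ.image e = K := by
    ext q
    simp only [Finset.mem_image, Finset.mem_univ, true_and]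
    constructor
    · rintro ⟨t, rfl⟩; exact heK t
    · intro hq
      have : key q ∈ Set.range (s.orderEmbOfFin rfl) := by
        rw [Finset.range_orderEmbOfFin]; exact Finset.mem_coe.2 (Finset.mem_image_of_mem key hq)
      obtain ⟨t, ht⟩ := this
      exact ⟨t, hinj (heK t) hq ((he t).trans ht)⟩
  have hsum : ∑ q ∈ K, g q = ∑ t, g (e t) := by
    rw [← himg, Finset.sum_image (fun _ _ _ _ h => heinj h)]
  rw [hsum]
  refine WIW.op l hl js s.card (fun t => g (e t)) (fun t => w (e t)) (fun t => hg _ (heK t))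
    ⟨fun t => hne _ (heK t), fun t u htu => hlt _ (heK t) _ (heK u) (hemono t u htu), ?_⟩ ?_
  · have : (Finset.univ.image fun t => minSupp (g (e t))) = s := by
      have h1 := congrArg (Finset.image key) himg
      rw [Finset.image_image] at h1
      exact h1
    rw [this]; exact hS
  · intro t u htu
    exact hv _ (heK t) _ (heK u) (hlt _ (heK t) _ (heK u) (hemono t u (by
      rw [Fin.lt_def]; omega)))

/-- In an admissible very fast growing sequence the growth condition propagates from
consecutive to arbitrary pairs. -/
lemma vfg_of_lt {d : ℕ} {f : Fin d → c00} {w : Fin d → ℕ∞}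
    (hne : ∀ q, (f q).support.Nonempty) (hb : ∀ q r : Fin d, q < r → Blocks (f q) (f r))
    (hvfg : ∀ q r : Fin d, (q : ℕ) + 1 = (r : ℕ) → (maxSupp (f q) : ℕ∞) < w r)
    (q r : Fin d) (h : q < r) : (maxSupp (f q) : ℕ∞) < w r := by
  have hr : 0 < (r : ℕ) := lt_of_le_of_lt (Nat.zero_le _) h
  obtain ⟨p, hp⟩ : ∃ p : Fin d, (p : ℕ) + 1 = r :=
    ⟨⟨r - 1, by omega⟩, by simp only; omega⟩
  have h1 : (maxSupp (f p) : ℕ∞) < w r := hvfg p r hp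
  rcases eq_or_ne q p with rfl | hqp
  · exact h1
  · have hlt : q < p := by
      rw [Fin.lt_def] at *
      have : (q : ℕ) ≠ p := fun h => hqp (Fin.ext h)
      omega
    have h2 := hb q p hlt
    have h3 := minSupp_le_maxSupp (hne p)
    refine lt_of_le_of_lt ?_ h1
    exact_mod_cast (h2.le.trans h3)

/-- The norming set is closed under multiplication by `{-1, 0, 1}`-valued sequences, with the
weight unchanged. This contains both unconditionality and the restriction to subsets. -/
lemma WIW.smul_sign {P : IWParams} {f : c00} {w : ℕ∞} (hf : WIW P f w) (θ : ℕ → ℝ)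
    (hθ : ∀ k, θ k = 0 ∨ θ k = 1 ∨ θ k = -1) : θ • f = 0 ∨ WIW P (θ • f) w := by
  classical
  induction hf with
  | unit i s hs =>
    have h1 : θ • (Finsupp.single i s : c00) = Finsupp.single i (θ i * s) := by
      ext k
      by_cases hk : i = k
      · subst hk; simp
      · simp [hk]
    rw [h1]
    rcases hθ i with h | h | h
    · left; simp [h]
    · right; rw [h, one_mul]; exact WIW.unit i s hs
    · right; rw [h]
      refine WIW.unit i _ ?_
      rcases hs with rfl | rfl <;> simp
  | op l hl js d f w hf hadm hvfg ih =>
    right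
    obtain ⟨hne, hb, hS⟩ := hadm
    set K : Finset (Fin d) := Finset.univ.filter fun q => θ • f q ≠ 0 with hK
    have hsum : θ • (((∏ i, P.m (js i) : ℕ) : ℝ)⁻¹ • ∑ q, f q)
        = ((∏ i, P.m (js i) : ℕ) : ℝ)⁻¹ • ∑ q ∈ K, θ • f q := by
      rw [hK, Finset.sum_filter_ne_zero, ← Finset.smul_sum]
      ext k
      simp only [Finsupp.coe_pointwise_smul, Finsupp.coe_smul, Pi.smul_apply, Pi.mul_apply,
        smul_eq_mul]
      ring
    have hsub : ∀ q k, (θ • f q) k ≠ 0 → f q k ≠ 0 := by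
      intro q k h h0
      apply h
      simp [h0]
    have hneK : ∀ q ∈ K, (θ • f q).support.Nonempty := by
      intro q hq
      exact Finsupp.support_nonempty_iff.2 (Finset.mem_filter.1 hq).2
    have hbK : ∀ q ∈ K, ∀ r ∈ K, q < r → Blocks (θ • f q) (θ • f r) := by
      intro q hq r hr h
      exact (hb q r h).mono (hneK q hq) (hneK r hr) (hsub q) (hsub r)
    have hbK' : ∀ q ∈ K, ∀ r ∈ K, minSupp (θ • f q) ≤ maxSupp (θ • f r) → q ≤ r := by
      intro q hq r hr h
      by_contra hlt
      exact absurd (hbK r hr q hq (not_le.1 hlt)) (not_lt.2 h)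
    rw [hsum]
    refine WIW.op_finset P K (fun q => θ • f q) w l hl js ?_ hneK ?_ ?_ ?_
    · intro q hq
      exact (ih q).resolve_left (Finset.mem_filter.1 hq).2
    · intro q hq r hr hqr
      rcases lt_or_gt_of_ne hqr with h | h
      · exact Or.inl (hbK q hq r hr h)
      · exact Or.inr (hbK r hr q hq h)
    · refine schreier_spread (fun q => minSupp (f q)) _ _ _ K hS ?_ ?_ ?_
        (Or.inr (one_le_sum_n P hl js))
      · intro q _; exact Finset.mem_image_of_mem _ (Finset.mem_univ q)
      · intro q hq; exact minSupp_mono (hneK q hq) (hsub q)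
      · intro q hq r hr
        have aux : ∀ g : Fin d → c00, (g q).support.Nonempty → (g r).support.Nonempty →
            (q < r → Blocks (g q) (g r)) → (r < q → Blocks (g r) (g q)) →
            (minSupp (g q) < minSupp (g r) ↔ q < r) := by
          intro g hgq hgr h1 h2
          have h3 := minSupp_le_maxSupp hgq
          have h4 := minSupp_le_maxSupp hgr
          rcases lt_trichotomy q r with h | h | h
          · have := h1 h; unfold Blocks at this
            exact ⟨fun _ => h, fun _ => by omega⟩
          · subst h; simp
          · have := h2 h; unfold Blocks at this
            exact ⟨fun _ => by omega, fun h' => absurd h (not_lt.2 h'.le)⟩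
        exact (aux f (hne q) (hne r) (hb q r) (hb r q)).trans
          (aux (fun q => θ • f q) (hneK q hq) (hneK r hr) (hbK q hq r hr)
            (hbK r hr q hq)).symm
    · intro q hq r hr h
      have hqr : q < r := by
        rcases lt_trichotomy q r with h' | h' | h'
        · exact h'
        · subst h'
          exact absurd h (not_lt.2 (minSupp_le_maxSupp (hneK q hq)))
        · have := hbK r hr q hq h'
          have h1 := minSupp_le_maxSupp (hneK q hq)
          have h2 := minSupp_le_maxSupp (hneK r hr)
          unfold Blocks at h this; omega
      refine lt_of_le_of_lt ?_ (vfg_of_lt hne hb hvfg q r hqr)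
      exact_mod_cast maxSupp_mono (hneK q hq) (hsub q)

lemma memWIW_zero (P : IWParams) : memWIW P 0 := by
  classical
  have h := WIW.op_finset P (∅ : Finset ℕ) (fun _ => 0) (fun _ => 0) 1 one_pos (fun _ => 0)
    (by simp) (by simp) (by simp)
    (by simpa [P.n_first] using schreier_one_of_card_le ∅ (by simp)) (by simp)
  exact ⟨_, by simpa using h⟩

lemma memWIW.smul_sign {P : IWParams} {f : c00} (hf : memWIW P f) (θ : ℕ → ℝ)
    (hθ : ∀ k, θ k = 0 ∨ θ k = 1 ∨ θ k = -1) : memWIW P (θ • f) := by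
  obtain ⟨w, hw⟩ := hf
  rcases hw.smul_sign θ hθ with h | h
  · rw [h]; exact memWIW_zero P
  · exact ⟨w, h⟩

/-- For a family of functionals that are disjointly supported, each coordinate of the sum is
the coordinate of the one member that does not vanish there. -/
lemma sum_apply_of_ne {d : ℕ} {f : Fin d → c00}
    (hb : ∀ q r : Fin d, q < r → Blocks (f q) (f r)) (s : Finset (Fin d)) (q : Fin d)
    (hq : q ∈ s) (k : ℕ) (h : f q k ≠ 0) : (∑ r ∈ s, f r) k = f q k := by
  classical
  rw [Finsupp.finsetSum_apply]
  refine Finset.sum_eq_single q (fun r _ hr => ?_) (fun h' => absurd hq h')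
  rcases lt_or_gt_of_ne hr with h1 | h1
  · by_contra h2
    exact h ((hb r q h1).disjoint h2)
  · exact (hb q r h1).disjoint h

/-- Coordinates of norming functionals are `0` or reciprocals of integers (`0` being encoded
as the inverse of the integer `0`). -/
lemma WIW.apply_eq_inv {P : IWParams} {f : c00} {w : ℕ∞} (hf : WIW P f w) (k : ℕ) :
    ∃ z : ℤ, f k = (z : ℝ)⁻¹ := by
  classical
  induction hf with
  | unit i s hs =>
    by_cases hk : i = k
    · subst hk
      rcases hs with rfl | rfl
      · exact ⟨1, by simp⟩
      · exact ⟨-1, by simp⟩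
    · exact ⟨0, by simp [hk]⟩
  | op l hl js d f w hf hadm hvfg ih =>
    by_cases h : ∃ q, f q k ≠ 0
    · obtain ⟨q, hq⟩ := h
      obtain ⟨z, hz⟩ := ih q
      refine ⟨(∏ i, P.m (js i) : ℕ) * z, ?_⟩
      rw [Finsupp.smul_apply, sum_apply_of_ne hadm.2.1 _ q (Finset.mem_univ _) k hq, hz]
      simp [mul_comm]
    · push Not at h
      refine ⟨0, ?_⟩
      simp [h]

lemma abs_int_inv_le_one (z : ℤ) : |((z : ℝ)⁻¹)| ≤ 1 := by
  rcases eq_or_ne z 0 with rfl | hz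
  · simp
  · rw [abs_inv]
    apply inv_le_one_of_one_le₀
    exact_mod_cast Int.one_le_abs hz

lemma memWIW.abs_apply_le {P : IWParams} {f : c00} (hf : memWIW P f) (k : ℕ) : |f k| ≤ 1 := by
  obtain ⟨w, hw⟩ := hf
  obtain ⟨z, hz⟩ := hw.apply_eq_inv k
  rw [hz]; exact abs_int_inv_le_one z

/-! ### The norm -/

lemma evalPair_eq_of_subset (f x : c00) {s : Finset ℕ} (h : x.support ⊆ s) :
    evalPair f x = ∑ k ∈ s, f k * x k := by
  classical
  have h1 : evalPair f x = ∑ k ∈ f.support ∪ s, f k * x k :=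
    Finset.sum_subset Finset.subset_union_left (fun k _ hk => by
      simp [Finsupp.notMem_support_iff.1 hk])
  rw [h1]
  refine (Finset.sum_subset Finset.subset_union_right (fun k _ hk => ?_)).symm
  simp [Finsupp.notMem_support_iff.1 (fun h' => hk (h h'))]

lemma evalPair_eq (f x : c00) : evalPair f x = ∑ k ∈ x.support, f k * x k :=
  evalPair_eq_of_subset f x subset_rfl

lemma evalPair_sum_smul {ι : Type*} (f : c00) (s : Finset ι) (c : ι → ℝ) (x : ι → c00) :
    evalPair f (∑ i ∈ s, c i • x i) = ∑ i ∈ s, c i * evalPair f (x i) := by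
  unfold evalPair Finsupp.sum
  simp_rw [Finset.mul_sum, Finsupp.finsetSum_apply, Finset.mul_sum]
  rw [Finset.sum_comm]
  refine Finset.sum_congr rfl fun i _ => Finset.sum_congr rfl fun k _ => ?_
  rw [Finsupp.smul_apply, smul_eq_mul]; ring

lemma evalPair_sum_left {ι : Type*} (s : Finset ι) (f : ι → c00) (x : c00) :
    evalPair (∑ i ∈ s, f i) x = ∑ i ∈ s, evalPair (f i) x := by
  simp_rw [evalPair_eq, Finsupp.finsetSum_apply, Finset.sum_mul]
  rw [Finset.sum_comm]

lemma evalPair_smul_left (c : ℝ) (f x : c00) : evalPair (c • f) x = c * evalPair f x := by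
  simp_rw [evalPair_eq, Finset.mul_sum, Finsupp.smul_apply, smul_eq_mul, mul_assoc]

lemma iwNorm_bddAbove (P : IWParams) (x : c00) :
    BddAbove {r | ∃ f, memWIW P f ∧ r = evalPair f x} := by
  refine ⟨∑ k ∈ x.support, |x k|, ?_⟩
  rintro r ⟨f, hf, rfl⟩
  rw [evalPair_eq]
  refine Finset.sum_le_sum fun k _ => ?_
  calc f k * x k ≤ |f k * x k| := le_abs_self _
    _ = |f k| * |x k| := abs_mul _ _
    _ ≤ 1 * |x k| := by gcongr; exact hf.abs_apply_le k
    _ = |x k| := one_mul _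

lemma evalPair_le_iwNorm {P : IWParams} {f : c00} (hf : memWIW P f) (x : c00) :
    evalPair f x ≤ iwNorm P x :=
  le_csSup (iwNorm_bddAbove P x) ⟨f, hf, rfl⟩

/-- Every norming functional may be replaced by its modulus on the modulus of the vector:
the unit vector basis is 1-unconditional. -/
lemma sum_abs_le_iwNorm {P : IWParams} {f : c00} (hf : memWIW P f) (x : c00) :
    ∑ k ∈ x.support, |f k| * |x k| ≤ iwNorm P x := by
  classical
  have h := evalPair_le_iwNorm (hf.smul_sign (fun k => if 0 ≤ f k * x k then 1 else -1)
    (fun k => by by_cases h : 0 ≤ f k * x k <;> simp [h])) x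
  rw [evalPair_eq] at h
  refine le_trans (le_of_eq ?_) h
  refine Finset.sum_congr rfl fun k _ => ?_
  rw [← abs_mul]
  by_cases h : 0 ≤ f k * x k
  · simp [h, abs_of_nonneg h]
  · simp [h, abs_of_neg (not_le.1 h)]

lemma abs_evalPair_le_iwNorm {P : IWParams} {f : c00} (hf : memWIW P f) (x : c00) :
    |evalPair f x| ≤ iwNorm P x := by
  refine le_trans ?_ (sum_abs_le_iwNorm hf x)
  rw [evalPair_eq]
  refine (Finset.abs_sum_le_sum_abs _ _).trans (le_of_eq ?_)
  simp_rw [abs_mul]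

lemma iwNorm_nonneg (P : IWParams) (x : c00) : 0 ≤ iwNorm P x := by
  have := evalPair_le_iwNorm (memWIW_zero P) x
  simpa [evalPair] using this

lemma iwNorm_le {P : IWParams} {x : c00} {C : ℝ} (h : ∀ f, memWIW P f → evalPair f x ≤ C) :
    iwNorm P x ≤ C := by
  refine csSup_le ⟨_, 0, memWIW_zero P, rfl⟩ ?_
  rintro r ⟨f, hf, rfl⟩
  exact h f hf

lemma iwNorm_sum_smul_le {ι : Type*} (P : IWParams) (s : Finset ι) (c : ι → ℝ) (x : ι → c00) :
    iwNorm P (∑ i ∈ s, c i • x i) ≤ ∑ i ∈ s, |c i| * iwNorm P (x i) := by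
  refine iwNorm_le fun f hf => ?_
  rw [evalPair_sum_smul]
  refine Finset.sum_le_sum fun i _ => (le_abs_self _).trans ?_
  rw [abs_mul]
  gcongr
  exact abs_evalPair_le_iwNorm hf _

lemma iwNorm_add_le (P : IWParams) (u v : c00) :
    iwNorm P (u + v) ≤ iwNorm P u + iwNorm P v := by
  simpa using iwNorm_sum_smul_le P (Finset.univ : Finset (Fin 2)) (fun _ => 1) ![u, v]

lemma iwNorm_smul_le (P : IWParams) (c : ℝ) (v : c00) :
    iwNorm P (c • v) ≤ |c| * iwNorm P v := by
  simpa using iwNorm_sum_smul_le P (Finset.univ : Finset (Fin 1)) (fun _ => c) (fun _ => v)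

/-- A convergent sequence of reciprocals of integers with nonzero limit is eventually equal to
its limit. -/
lemma eventually_eq_of_tendsto_int_inv {u : ℕ → ℝ} {a : ℝ} (hu : ∀ n, ∃ z : ℤ, u n = (z : ℝ)⁻¹)
    (ha : a ≠ 0) (h : Tendsto u atTop (𝓝 a)) : ∀ᶠ n in atTop, u n = a := by
  choose z hz using hu
  have h1 : Tendsto (fun n => (z n : ℝ)) atTop (𝓝 a⁻¹) := by
    have := h.inv₀ ha
    refine this.congr fun n => ?_
    simp [hz n]
  have h2 : ∀ᶠ n in atTop, |(z n : ℝ) - a⁻¹| < 1 / 2 := by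
    have := Metric.tendsto_nhds.1 h1 (1 / 2) (by norm_num)
    simpa [Real.dist_eq] using this
  obtain ⟨N, hN⟩ := eventually_atTop.1 h2
  have h3 : ∀ n ≥ N, u n = u N := by
    intro n hn
    have h4 : |(z n : ℝ) - z N| < 1 := by
      have ha1 := abs_lt.1 (hN n hn)
      have ha2 := abs_lt.1 (hN N le_rfl)
      rw [abs_lt]
      constructor <;> linarith [ha1.1, ha1.2, ha2.1, ha2.2]
    have h5 : |z n - z N| < 1 := by exact_mod_cast h4
    have h6 : z n = z N := by
      have := Int.abs_lt_one_iff.1 h5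
      omega
    rw [hz, hz, h6]
  have h7 : u N = a := by
    refine tendsto_nhds_unique ?_ h
    refine tendsto_const_nhds.congr' ?_
    filter_upwards [eventually_ge_atTop N] with n hn
    exact (h3 n hn).symm
  filter_upwards [eventually_ge_atTop N] with n hn
  rw [h3 n hn, h7]

/-- The norm of a normalized vector is attained, by a functional supported in the
support of the vector. A maximizing sequence converges pointwise along a subsequence; since the
nonzero coordinates are reciprocals of integers, the limit is a restriction of a member of the
subsequence, hence belongs to the norming set. -/
lemma exists_norming (P : IWParams) (x : c00) (hx : iwNorm P x = 1) :
    ∃ f w, WIW P f w ∧ (∀ k, f k ≠ 0 → x k ≠ 0) ∧ evalPair f x = 1 := by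
  classical
  have hseq : ∀ n : ℕ, ∃ f, memWIW P f ∧ 1 - 1 / ((n : ℝ) + 1) < evalPair f x := by
    intro n
    have hlt : 1 - 1 / ((n : ℝ) + 1) < iwNorm P x := by
      rw [hx]
      have : (0 : ℝ) < 1 / ((n : ℝ) + 1) := by positivity
      linarith
    have hne : {r | ∃ f, memWIW P f ∧ r = evalPair f x}.Nonempty := ⟨_, 0, memWIW_zero P, rfl⟩
    obtain ⟨r, ⟨f, hf, rfl⟩, hr⟩ := exists_lt_of_lt_csSup hne hlt
    exact ⟨f, hf, hr⟩
  choose f hf hfx using hseq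
  have hcomp : IsCompact (Set.univ.pi fun _ : ℕ => Set.Icc (-1 : ℝ) 1) :=
    isCompact_univ_pi fun _ => isCompact_Icc
  obtain ⟨g, -, φ, hφ, hlim⟩ := hcomp.tendsto_subseq (x := fun n => (f n : ℕ → ℝ)) (by
    intro n k _
    exact abs_le.1 ((hf n).abs_apply_le k))
  have hlimk : ∀ k, Tendsto (fun n => f (φ n) k) atTop (𝓝 (g k)) := fun k =>
    (tendsto_pi_nhds.1 hlim) k
  have hev : ∀ᶠ n in atTop, ∀ k ∈ x.support, g k ≠ 0 → f (φ n) k = g k := by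
    rw [eventually_all_finset]
    intro k _
    by_cases hg : g k = 0
    · simp [hg]
    · filter_upwards [eventually_eq_of_tendsto_int_inv (fun n => by
        obtain ⟨w, hw⟩ := hf (φ n)
        exact hw.apply_eq_inv k) hg (hlimk k)] with n hn _
      exact hn
  obtain ⟨n, hn⟩ := hev.exists
  have hgx : ∑ k ∈ x.support, g k * x k = 1 := by
    have h1 : Tendsto (fun n => evalPair (f (φ n)) x) atTop (𝓝 (∑ k ∈ x.support, g k * x k)) := by
      simp_rw [evalPair_eq]
      exact tendsto_finsetSum _ fun k _ => (hlimk k).mul_const _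
    refine tendsto_nhds_unique h1 ?_
    have h2 : Tendsto (fun n : ℕ => 1 - 1 / ((n : ℝ) + 1)) atTop (𝓝 1) := by
      simpa using (tendsto_one_div_add_atTop_nhds_zero_nat (𝕜 := ℝ)).const_sub 1
    refine tendsto_of_tendsto_of_tendsto_of_le_of_le (h2.comp hφ.tendsto_atTop)
      tendsto_const_nhds (fun n => (hfx (φ n)).le) (fun n => ?_)
    rw [← hx]
    exact evalPair_le_iwNorm (hf _) x
  set θ : ℕ → ℝ := fun k => if k ∈ x.support ∧ g k ≠ 0 then 1 else 0 with hθ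
  have hval : evalPair (θ • f (φ n)) x = 1 := by
    rw [evalPair_eq, ← hgx]
    refine Finset.sum_congr rfl fun k hk => ?_
    by_cases hg : g k = 0
    · simp [hθ, hg]
    · have h1 : θ k = 1 := if_pos ⟨hk, hg⟩
      have h2 : (θ • f (φ n)) k = θ k * f (φ n) k := rfl
      rw [h2, h1, hn k hk hg, one_mul]
  obtain ⟨w, hw⟩ := hf (φ n)
  rcases hw.smul_sign θ (fun k => by
    by_cases h : k ∈ x.support ∧ g k ≠ 0
    · right; left; exact if_pos h
    · left; exact if_neg h) with h | h
  · rw [h] at hval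
    simp [evalPair] at hval
  · refine ⟨_, w, h, fun k hk => ?_, hval⟩
    intro hxk
    apply hk
    have h2 : (θ • f (φ n)) k = θ k * f (φ n) k := rfl
    rw [h2, hθ]
    simp [hxk]

/-! ### The lower estimate on an infinite set -/

lemma blocks_of_lt {x : ℕ → c00} (hne : ∀ k, (x k).support.Nonempty)
    (hb : ∀ k, Blocks (x k) (x (k + 1))) {k l : ℕ} (h : k < l) : Blocks (x k) (x l) := by
  induction l, h using Nat.le_induction with
  | base => exact hb k
  | succ l _ ih => exact (ih.trans_le (minSupp_le_maxSupp (hne l))).trans (hb l)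

lemma le_minSupp {x : ℕ → c00} (hne : ∀ k, (x k).support.Nonempty)
    (hb : ∀ k, Blocks (x k) (x (k + 1))) (k : ℕ) : k ≤ minSupp (x k) := by
  induction k with
  | zero => exact Nat.zero_le _
  | succ k ih =>
    have h1 := minSupp_le_maxSupp (hne k)
    have h2 : maxSupp (x k) < minSupp (x (k + 1)) := hb k
    omega

/-- A functional of the norming set that is at least `δ` on each member of a disjointly supported
family witnesses a lower `ℓ₁` estimate: its signs can be adjusted on the supports of the members
to match those of the coefficients. -/
lemma lower_of_functional {P : IWParams} {x : ℕ → c00} {F : Finset ℕ} {H : c00}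
    (hdisj : ∀ i ∈ F, ∀ i' ∈ F, ∀ k, x i k ≠ 0 → x i' k ≠ 0 → i = i')
    (hH : memWIW P H) {δ : ℝ} (hδ : ∀ i ∈ F, δ ≤ evalPair H (x i)) (c : ℕ → ℝ) :
    δ * ∑ i ∈ F, |c i| ≤ iwNorm P (∑ i ∈ F, c i • x i) := by
  classical
  set θ : ℕ → ℝ := fun k => if ∃ i ∈ F, x i k ≠ 0 ∧ c i < 0 then -1 else 1 with hθ
  have h1 := evalPair_le_iwNorm (hH.smul_sign θ (fun k => by
    by_cases h : ∃ i ∈ F, x i k ≠ 0 ∧ c i < 0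
    · right; right; exact if_pos h
    · right; left; exact if_neg h)) (∑ i ∈ F, c i • x i)
  refine le_trans ?_ h1
  rw [evalPair_sum_smul, Finset.mul_sum]
  refine Finset.sum_le_sum fun i hi => ?_
  have h2 : evalPair (θ • H) (x i) = (if c i < 0 then -1 else 1) * evalPair H (x i) := by
    rw [evalPair_eq, evalPair_eq, Finset.mul_sum]
    refine Finset.sum_congr rfl fun k hk => ?_
    have hk' := Finsupp.mem_support_iff.1 hk
    have h3 : (θ • H) k = θ k * H k := rfl
    have h4 : θ k = if c i < 0 then -1 else 1 := by
      by_cases hc : c i < 0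
      · rw [if_pos hc]
        exact if_pos ⟨i, hi, hk', hc⟩
      · rw [if_neg hc]
        refine if_neg ?_
        rintro ⟨i', hi', hk'', hc'⟩
        exact hc (hdisj i hi i' hi' k hk' hk'' ▸ hc')
    rw [h3, h4, mul_assoc]
  rw [h2]
  by_cases hc : c i < 0
  · rw [if_pos hc, abs_of_neg hc]
    nlinarith [hδ i hi]
  · rw [if_neg hc, abs_of_nonneg (not_lt.1 hc)]
    nlinarith [hδ i hi, not_lt.1 hc]

lemma lower_of_sum {P : IWParams} {x g : ℕ → c00} {F : Finset ℕ} {M : ℝ} (hM : 0 < M)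
    (hdisj : ∀ i ∈ F, ∀ i' ∈ F, ∀ k, x i k ≠ 0 → x i' k ≠ 0 → i = i')
    (hsupp : ∀ i ∈ F, ∀ k, g i k ≠ 0 → x i k ≠ 0)
    (hg : ∀ i ∈ F, 1 / 2 ≤ evalPair (g i) (x i))
    (hH : memWIW P (M⁻¹ • ∑ i ∈ F, g i)) (c : ℕ → ℝ) :
    (1 / (2 * M)) * ∑ i ∈ F, |c i| ≤ iwNorm P (∑ i ∈ F, c i • x i) := by
  refine lower_of_functional hdisj hH (fun i hi => ?_) c
  rw [evalPair_smul_left, evalPair_sum_left, Finset.sum_eq_single i]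
  · have h1 : 1 / (2 * M) = M⁻¹ * (1 / 2) := by field_simp
    rw [h1]
    gcongr
    exact hg i hi
  · intro i' hi' hne
    rw [evalPair_eq]
    refine Finset.sum_eq_zero fun k hk => ?_
    by_contra h
    exact hne (hdisj i' hi' i hi k (hsupp i' hi' k (left_ne_zero_of_mul h))
      (Finsupp.mem_support_iff.1 hk))
  · intro h; exact absurd hi h

/-- The lower estimate when the norming functionals of the vectors have rapidly increasing
weights: they may be averaged directly. -/
lemma lower_of_weights {P : IWParams} {x f : ℕ → c00} {w : ℕ → ℕ∞} {L : Set ℕ}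
    (hne : ∀ k, (x k).support.Nonempty) (hb : ∀ k l, k < l → Blocks (x k) (x l))
    (hf : ∀ i, WIW P (f i) (w i)) (hsupp : ∀ i k, f i k ≠ 0 → x i k ≠ 0)
    (hfx : ∀ i, evalPair (f i) (x i) = 1)
    (hL : ∀ i ∈ L, ∀ i' ∈ L, i < i' → (maxSupp (x i) : ℕ∞) < w i')
    (j0 : ℕ) (F : Finset ℕ) (hF : ↑F ⊆ L)
    (hS : (F.image fun i => minSupp (x i)) ∈ Schreier (P.n j0)) (c : ℕ → ℝ) :
    (1 / (2 * (P.m j0 : ℝ))) * ∑ i ∈ F, |c i| ≤ iwNorm P (∑ i ∈ F, c i • x i) := by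
  classical
  have hfne : ∀ i, (f i).support.Nonempty := by
    intro i
    rw [Finsupp.support_nonempty_iff]
    intro h
    have := hfx i
    rw [h] at this
    simp [evalPair] at this
  have hfb : ∀ k l, k < l → Blocks (f k) (f l) := fun k l h =>
    (hb k l h).mono (hfne k) (hfne l) (hsupp k) (hsupp l)
  have hmono : ∀ y : ℕ → c00, (∀ k, (y k).support.Nonempty) → (∀ k l, k < l → Blocks (y k) (y l)) →
      StrictMono fun i => minSupp (y i) := fun y h1 h2 k l h =>
    (minSupp_le_maxSupp (h1 k)).trans_lt (h2 k l h)
  have hadm : (F.image fun i => minSupp (f i)) ∈ Schreier (P.n j0) := by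
    refine schreier_spread (fun i => minSupp (x i)) (fun i => minSupp (f i)) _ _ F hS
      (fun q hq => Finset.mem_image_of_mem _ hq) (fun q _ => minSupp_mono (hfne q) (hsupp q))
      (fun q _ r _ => ?_) (Or.inr (one_le_n P j0))
    rw [(hmono x hne hb).lt_iff_lt, (hmono f hfne hfb).lt_iff_lt]
  have hop := WIW.op_finset P F f w 1 one_pos (fun _ => j0) (fun q _ => hf q) (fun q _ => hfne q)
    (fun q _ r _ h => (lt_or_gt_of_ne h).imp (hfb q r) (hfb r q)) (by simpa using hadm)
    (fun q hq r hr h => by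
      have hqr : q < r := (hmono f hfne hfb).lt_iff_lt.1 ((minSupp_le_maxSupp (hfne q)).trans_lt h)
      refine lt_of_le_of_lt ?_ (hL q (hF hq) r (hF hr) hqr)
      exact_mod_cast maxSupp_mono (hfne q) (hsupp q))
  refine lower_of_sum (g := f) (by have := two_le_m P j0; positivity) ?_ (fun i _ => hsupp i)
    (fun i _ => by rw [hfx i]; norm_num) ⟨_, by simpa using hop⟩ c
  intro i _ i' _ k h h'
  by_contra hii
  rcases lt_or_gt_of_ne hii with h1 | h1
  · exact h' ((hb _ _ h1).disjoint h)
  · exact h ((hb _ _ h1).disjoint h')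

/-- The lower estimate when the norming functionals of the vectors all have the same weight and
the same admissibility. The first summand of each norming functional is dropped, which costs at
most half of the action. The weights of the remaining summands exceed the maximum of the supports
of the preceding vectors, so that all of them together form a very fast growing sequence, to
which one operation of vector weight `(j₀, js)` applies. -/
lemma lower_of_const {P : IWParams} {x : ℕ → c00} {L : Set ℕ} {l : ℕ} (hl : 0 < l)
    (js : Fin l → ℕ) {d : ℕ → ℕ} {f : ∀ i, Fin (d i) → c00} {w : ∀ i, Fin (d i) → ℕ∞}
    (hne : ∀ k, (x k).support.Nonempty) (hb : ∀ k l, k < l → Blocks (x k) (x l))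
    (hx : ∀ i, iwNorm P (x i) = 1)
    (hf : ∀ i ∈ L, ∀ q, WIW P (f i q) (w i q))
    (hadm : ∀ i ∈ L, Admissible (Schreier (∑ i, P.n (js i))) (f i))
    (hvfg : ∀ i ∈ L, ∀ q r : Fin (d i), (q : ℕ) + 1 = (r : ℕ) → (maxSupp (f i q) : ℕ∞) < w i r)
    (hsupp : ∀ i ∈ L, ∀ q k, f i q k ≠ 0 → x i k ≠ 0)
    (hfx : ∀ i ∈ L, evalPair (((∏ i, P.m (js i) : ℕ) : ℝ)⁻¹ • ∑ q, f i q) (x i) = 1)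
    (j0 : ℕ) (F : Finset ℕ) (hF : ↑F ⊆ L)
    (hS : (F.image fun i => minSupp (x i)) ∈ Schreier (P.n j0)) (c : ℕ → ℝ) :
    (1 / (2 * (P.m j0 : ℝ))) * ∑ i ∈ F, |c i| ≤ iwNorm P (∑ i ∈ F, c i • x i) := by
  classical
  set p : ℕ := ∏ i, P.m (js i) with hp
  have hp2 : 2 ≤ p := two_le_prod_m P hl js
  set T : ∀ i, Finset (Fin (d i)) := fun i => Finset.univ.filter fun q => 0 < (q : ℕ) with hT
  set g : ℕ → c00 := fun i => (p : ℝ)⁻¹ • ∑ q ∈ T i, f i q with hg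
  have hxmono : StrictMono fun i => minSupp (x i) := fun k l h =>
    (minSupp_le_maxSupp (hne k)).trans_lt (hb k l h)
  have hcross : ∀ i ∈ L, ∀ i' ∈ L, i < i' → ∀ q r, Blocks (f i q) (f i' r) :=
    fun i hi i' hi' h q r => (hb i i' h).mono ((hadm i hi).1 q) ((hadm i' hi').1 r)
      (hsupp i hi q) (hsupp i' hi' r)
  have hasymm : ∀ i ∈ L, ∀ i' ∈ L, ∀ q r, Blocks (f i q) (f i' r) → ¬ Blocks (f i' r) (f i q) := by
    intro i hi i' hi' q r h h'
    have h1 := minSupp_le_maxSupp ((hadm i hi).1 q)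
    have h2 := minSupp_le_maxSupp ((hadm i' hi').1 r)
    unfold Blocks at h h'
    omega
  have hirr : ∀ i ∈ L, ∀ q, ¬ Blocks (f i q) (f i q) := fun i hi q h => hasymm i hi i hi q q h h
  have hmemF : ∀ {i}, i ∈ F → i ∈ L := fun h => hF h
  have hdisj : ∀ i ∈ F, ∀ i' ∈ F, ∀ k, x i k ≠ 0 → x i' k ≠ 0 → i = i' := by
    intro i _ i' _ k h h'
    by_contra hii
    rcases lt_or_gt_of_ne hii with h1 | h1
    · exact h' ((hb _ _ h1).disjoint h)
    · exact h ((hb _ _ h1).disjoint h')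
  have hS' : ((F.sigma T).image fun a => minSupp (f a.1 a.2)) ∈
      Schreier (P.n j0 + ∑ i, P.n (js i)) := by
    have h1 := schreier_conv (fun i => minSupp (x i))
      (fun i => (T i).image fun q => minSupp (f i q)) (∑ i, P.n (js i)) (P.n j0) F hS
      (fun i hi => schreier_spread (fun q => minSupp (f i q)) (fun q => minSupp (f i q)) _ _ (T i)
        (hadm i (hmemF hi)).2.2 (fun q _ => Finset.mem_image_of_mem _ (Finset.mem_univ q))
        (fun _ _ => le_rfl) (fun _ _ _ _ => Iff.rfl) (Or.inr (one_le_sum_n P hl js)))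
      hxmono.injective.injOn
      (fun i hi k hk => by
        obtain ⟨q, -, rfl⟩ := Finset.mem_image.1 hk
        exact minSupp_mono ((hadm i (hmemF hi)).1 q) (hsupp i (hmemF hi) q))
      (fun i hi i' hi' h k hk k' hk' => by
        obtain ⟨q, -, rfl⟩ := Finset.mem_image.1 hk
        obtain ⟨r, -, rfl⟩ := Finset.mem_image.1 hk'
        exact (minSupp_le_maxSupp ((hadm i (hmemF hi)).1 q)).trans_lt
          (hcross i (hmemF hi) i' (hmemF hi') (hxmono.lt_iff_lt.1 h) q r))
    convert h1 using 1
    ext k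
    simp only [Finset.mem_image, Finset.mem_sigma, Finset.mem_biUnion, Sigma.exists]
    constructor
    · rintro ⟨i, q, ⟨hi, hq⟩, rfl⟩
      exact ⟨i, hi, q, hq, rfl⟩
    · rintro ⟨i, hi, q, hq, rfl⟩
      exact ⟨i, q, ⟨hi, hq⟩, rfl⟩
  have hop := WIW.op_finset P (F.sigma T) (fun a => f a.1 a.2) (fun a => w a.1 a.2) (l + 1)
    (Nat.succ_pos l) (Fin.cons j0 js)
    (fun a ha => hf a.1 (hmemF (Finset.mem_sigma.1 ha).1) a.2)
    (fun a ha => (hadm a.1 (hmemF (Finset.mem_sigma.1 ha).1)).1 a.2)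
    (by
      rintro ⟨i, q⟩ ha ⟨i', r⟩ hb' hab
      have hi := hmemF (Finset.mem_sigma.1 ha).1
      have hi' := hmemF (Finset.mem_sigma.1 hb').1
      rcases lt_trichotomy i i' with h | rfl | h
      · exact Or.inl (hcross i hi i' hi' h q r)
      · have hqr : q ≠ r := fun h => hab (by rw [h])
        exact (lt_or_gt_of_ne hqr).imp ((hadm i hi).2.1 q r) ((hadm i hi).2.1 r q)
      · exact Or.inr (hcross i' hi' i hi h r q))
    (by simpa [Fin.sum_univ_succ] using hS')
    (by
      rintro ⟨i, q⟩ ha ⟨i', r⟩ hb' hab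
      have hi := hmemF (Finset.mem_sigma.1 ha).1
      have hi' := hmemF (Finset.mem_sigma.1 hb').1
      have hr : 0 < (r : ℕ) := (Finset.mem_filter.1 (Finset.mem_sigma.1 hb').2).2
      rcases lt_trichotomy i i' with h | rfl | h
      · -- the predecessor of the summand `r` lies beyond the support of `x i`
        obtain ⟨r', hr'⟩ : ∃ r' : Fin (d i'), (r' : ℕ) + 1 = r :=
          ⟨⟨r - 1, by omega⟩, by simp only; omega⟩
        refine lt_of_le_of_lt ?_ (hvfg i' hi' r' r hr')
        have h1 : maxSupp (f i q) < minSupp (f i' r') := hcross i hi i' hi' h q r'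
        exact_mod_cast h1.le.trans (minSupp_le_maxSupp ((hadm i' hi').1 r'))
      · refine vfg_of_lt (hadm i hi).1 (hadm i hi).2.1 (hvfg i hi) q r ?_
        by_contra hqr
        rcases (not_lt.1 hqr).eq_or_lt with h | h
        · exact hirr i hi q (by simpa [h] using hab)
        · exact hasymm i hi i hi q r hab ((hadm i hi).2.1 r q h)
      · exact absurd hab (hasymm i' hi' i hi r q (hcross i' hi' i hi h r q)))
  have hfun : (((∏ i, P.m ((Fin.cons j0 js : Fin (l + 1) → ℕ) i) : ℕ) : ℝ)⁻¹ •
      ∑ a ∈ F.sigma T, f a.1 a.2) = (P.m j0 : ℝ)⁻¹ • ∑ i ∈ F, g i := by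
    rw [Finset.sum_sigma, Fin.prod_univ_succ]
    simp only [Fin.cons_zero, Fin.cons_succ, ← hp, hg]
    rw [← Finset.smul_sum, smul_smul, Nat.cast_mul, mul_inv]
  rw [hfun] at hop
  refine lower_of_sum (g := g) (by have := two_le_m P j0; positivity) hdisj ?_ ?_ ⟨_, hop⟩ c
  · intro i hi k hk
    have h1 : (∑ q ∈ T i, f i q) k ≠ 0 := fun h => hk (by
      rw [hg]; simp only [Finsupp.smul_apply, h, smul_zero])
    rw [Finsupp.finsetSum_apply] at h1
    obtain ⟨q, -, hq⟩ := Finset.exists_ne_zero_of_sum_ne_zero h1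
    exact hsupp i (hmemF hi) q k hq
  · intro i hi
    have h1 := hfx i (hmemF hi)
    have h2 : evalPair (∑ q, f i q) (x i) ≤ evalPair (∑ q ∈ T i, f i q) (x i) + 1 := by
      rw [evalPair_sum_left, evalPair_sum_left,
        ← Finset.sum_filter_add_sum_filter_not Finset.univ (fun q : Fin (d i) => 0 < (q : ℕ))]
      gcongr
      rcases Nat.eq_zero_or_pos (d i) with hd | hd
      · rw [Finset.sum_eq_zero]
        · exact zero_le_one
        · intro q; exact absurd q.2 (by omega)
      · rw [Finset.sum_eq_single ⟨0, hd⟩]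
        · rw [← hx i]
          exact evalPair_le_iwNorm ⟨_, hf i (hmemF hi) _⟩ _
        · intro q hq hq0
          exfalso
          apply hq0
          ext
          simpa using hq
        · simp
    have hp0 : (2 : ℝ) ≤ p := by exact_mod_cast hp2
    rw [evalPair_smul_left] at h1 ⊢
    have h3 : evalPair (∑ q, f i q) (x i) = p := by
      field_simp at h1
      exact h1
    rw [inv_mul_eq_div, div_le_div_iff₀ (by norm_num) (by linarith)]
    linarith

/-- A functional of finite weight is the outcome of an operation. -/
lemma WIW.exists_of_ne_top {P : IWParams} {f : c00} {w : ℕ∞} (hf : WIW P f w) (hw : w ≠ ⊤) :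
    ∃ (l : ℕ) (_ : 0 < l) (js : Fin l → ℕ) (d : ℕ) (h : Fin d → c00) (v : Fin d → ℕ∞),
      (∀ q, WIW P (h q) (v q)) ∧ Admissible (Schreier (∑ i, P.n (js i))) h ∧
      (∀ q r : Fin d, (q : ℕ) + 1 = (r : ℕ) → (maxSupp (h q) : ℕ∞) < v r) ∧
      f = ((∏ i, P.m (js i) : ℕ) : ℝ)⁻¹ • ∑ q, h q ∧ w = ((∏ i, P.m (js i) : ℕ) : ℕ∞) := by
  cases hf with
  | unit i s hs => exact absurd rfl hw
  | op l hl js d h v hh hadm hvfg => exact ⟨l, hl, js, d, h, v, hh, hadm, hvfg, rfl, rfl⟩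

lemma sum_n_le (P : IWParams) {l : ℕ} (js : Fin l → ℕ) {N : ℕ} (h : ∏ i, P.m (js i) ≤ N) :
    ∑ i, P.n (js i) ≤ N * P.n N := by
  have hl : l ≤ N := by
    refine le_trans (Nat.lt_two_pow_self (n := l)).le (le_trans ?_ h)
    calc 2 ^ l = ∏ _i : Fin l, 2 := by simp
      _ ≤ _ := Finset.prod_le_prod' fun i _ => two_le_m P _
  calc ∑ i, P.n (js i) ≤ ∑ _i : Fin l, P.n N := by
        refine Finset.sum_le_sum fun i _ => P.n_mono.monotone ?_
        exact (P.m_mono.id_le _).trans ((m_le_prod_m P js i).trans h)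
    _ = l * P.n N := by simp
    _ ≤ N * P.n N := Nat.mul_le_mul_right _ hl

lemma exists_lower (P : IWParams) (x : ℕ → c00) (hx : IsNormBlockSeq (iwNorm P) x) :
    ∃ L : Set ℕ, L.Infinite ∧
      ∀ j0 : ℕ, ∀ F : Finset ℕ, ↑F ⊆ L →
        (F.image fun i => minSupp (x i)) ∈ Schreier (P.n j0) →
        ∀ c : ℕ → ℝ,
          (1 / (2 * (P.m j0 : ℝ))) * ∑ i ∈ F, |c i| ≤ iwNorm P (∑ i ∈ F, c i • x i) := by
  classical
  obtain ⟨hne, hb', hnorm⟩ := hx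
  have hb : ∀ k l, k < l → Blocks (x k) (x l) := fun k l h => blocks_of_lt hne hb' h
  choose f w hf hsupp hfx using fun i => exists_norming P (x i) (hnorm i)
  by_cases hcase : ∀ N : ℕ, ∃ i ≥ N, (N : ℕ∞) < w i
  · obtain ⟨φ, -, hφ⟩ := exists_seq_of_forall_finset_exists (fun _ : ℕ => True)
      (fun i i' => i < i' ∧ (maxSupp (x i) : ℕ∞) < w i') (fun s _ => by
        obtain ⟨i, hi, hiw⟩ := hcase (s.sup (fun k => k + 1 + maxSupp (x k)))
        refine ⟨i, trivial, fun k hk => ?_⟩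
        have h1 : k + 1 + maxSupp (x k) ≤ s.sup (fun k => k + 1 + maxSupp (x k)) :=
          Finset.le_sup (f := fun k => k + 1 + maxSupp (x k)) hk
        refine ⟨by omega, lt_of_le_of_lt ?_ hiw⟩
        exact_mod_cast (by omega : maxSupp (x k) ≤ s.sup (fun k => k + 1 + maxSupp (x k))))
    have hφm : StrictMono φ := fun a b h => (hφ a b h).1
    refine ⟨Set.range φ, Set.infinite_range_of_injective hφm.injective, ?_⟩
    refine lower_of_weights hne hb hf hsupp hfx ?_
    rintro _ ⟨a, rfl⟩ _ ⟨b, rfl⟩ h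
    exact (hφ a b (hφm.lt_iff_lt.1 h)).2
  · push Not at hcase
    obtain ⟨N, hN⟩ := hcase
    choose l hl js d h v hh hadm hvfg hfe hwe using fun t : ℕ =>
      (hf (N + t)).exists_of_ne_top (ne_top_of_le_ne_top (ENat.natCast_ne_top N)
        (hN (N + t) (Nat.le_add_right _ _)))
    have hpN : ∀ t, ∏ i, P.m (js t i) ≤ N := fun t => by
      have := hN (N + t) (Nat.le_add_right _ _)
      rw [hwe t] at this
      exact_mod_cast this
    -- infinitely many functionals share both the weight and the admissibility
    obtain ⟨y, hy⟩ := Finite.exists_infinite_fiber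
      (fun t : ℕ => ((⟨∏ i, P.m (js t i), Nat.lt_succ_of_le (hpN t)⟩,
        ⟨∑ i, P.n (js t i), Nat.lt_succ_of_le (sum_n_le P (js t) (hpN t))⟩) :
          Fin (N + 1) × Fin (N * P.n N + 1)))
    rw [Set.infinite_coe_iff] at hy
    obtain ⟨t0, ht0⟩ := hy.nonempty
    have hshare : ∀ t ∈ (fun t : ℕ => ((⟨∏ i, P.m (js t i), Nat.lt_succ_of_le (hpN t)⟩,
        ⟨∑ i, P.n (js t i), Nat.lt_succ_of_le (sum_n_le P (js t) (hpN t))⟩) :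
          Fin (N + 1) × Fin (N * P.n N + 1))) ⁻¹' {y},
        ∏ i, P.m (js t i) = ∏ i, P.m (js t0 i) ∧ ∑ i, P.n (js t i) = ∑ i, P.n (js t0 i) := by
      intro t ht
      have h1 := (Set.mem_singleton_iff.1 ht).trans (Set.mem_singleton_iff.1 ht0).symm
      simpa [Prod.ext_iff, Fin.ext_iff] using h1
    refine ⟨(fun t => N + t) '' _, hy.image (fun a _ b _ hab => Nat.add_left_cancel hab), ?_⟩
    have hsub : ∀ i ∈ (fun t => N + t) '' ((fun t : ℕ =>
        ((⟨∏ i, P.m (js t i), Nat.lt_succ_of_le (hpN t)⟩,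
        ⟨∑ i, P.n (js t i), Nat.lt_succ_of_le (sum_n_le P (js t) (hpN t))⟩) :
          Fin (N + 1) × Fin (N * P.n N + 1))) ⁻¹' {y}), N + (i - N) = i ∧
        ∏ k, P.m (js (i - N) k) = ∏ k, P.m (js t0 k) ∧
        ∑ k, P.n (js (i - N) k) = ∑ k, P.n (js t0 k) := by
      rintro i ⟨t, ht, hti⟩
      have hti' : N + t = i := hti
      obtain rfl : t = i - N := by omega
      exact ⟨hti', hshare _ ht⟩
    refine lower_of_const (hl t0) (js t0) (d := fun i => d (i - N)) (f := fun i => h (i - N))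
      (w := fun i => v (i - N)) hne hb hnorm (fun i _ => hh _) (fun i hi => ?_)
      (fun i _ => hvfg _) (fun i hi q k hk => ?_) (fun i hi => ?_)
    · rw [← (hsub i hi).2.2]
      exact hadm _
    · rw [← (hsub i hi).1]
      refine hsupp _ k ?_
      rw [hfe, Finsupp.smul_apply, sum_apply_of_ne (hadm _).2.1 _ q (Finset.mem_univ q) k hk]
      have := two_le_prod_m P (hl (i - N)) (js (i - N))
      exact smul_ne_zero (inv_ne_zero (by positivity)) hk
    · have h1 := hfx (N + (i - N))
      rw [hfe, (hsub i hi).1, (hsub i hi).2.1] at h1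
      exact h1

/-! ### Existence of spreading models -/

lemma abs_iwNorm_sub_le (P : IWParams) (u v : c00) :
    |iwNorm P u - iwNorm P v| ≤ iwNorm P (u - v) := by
  have h1 := iwNorm_add_le P (u - v) v
  have h2 := iwNorm_add_le P ((-1 : ℝ) • (u - v)) u
  have h3 := iwNorm_smul_le P (-1) (u - v)
  rw [sub_add_cancel] at h1
  have h4 : (-1 : ℝ) • (u - v) + u = v := by simp
  rw [h4] at h2
  rw [abs_neg, abs_one, one_mul] at h3
  rw [abs_le]
  constructor <;> linarith

/-- The iterated ultrafilter limit
`lim_{n₁} ⋯ lim_{n_m} ‖u + a₁ y_{n₁} + ⋯ + a_m y_{n_m}‖` of the norm along a fixed nonprincipal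
ultrafilter on `ℕ`. -/
noncomputable def iterLim (P : IWParams) (y : ℕ → c00) : ∀ m : ℕ, (Fin m → ℝ) → c00 → ℝ
  | 0, _, u => iwNorm P u
  | m + 1, a, u =>
    limUnder (hyperfilter ℕ : Filter ℕ) fun n => iterLim P y m (Fin.tail a) (u + a 0 • y n)

lemma sum_fin_tail {m : ℕ} (a : Fin (m + 1) → ℝ) (F : ℝ → ℝ) :
    ∑ i, F (a i) = F (a 0) + ∑ i, F (Fin.tail a i) := by
  rw [Fin.sum_univ_succ]; rfl

lemma iwNorm_add_smul_le {P : IWParams} {y : ℕ → c00} (hy : ∀ n, iwNorm P (y n) ≤ 1) (u : c00)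
    (c : ℝ) (n : ℕ) : iwNorm P (u + c • y n) ≤ iwNorm P u + |c| := by
  refine (iwNorm_add_le P _ _).trans ?_
  gcongr
  refine (iwNorm_smul_le P _ _).trans ?_
  exact mul_le_of_le_one_right (abs_nonneg c) (hy n)

lemma tendsto_limUnder_of_mem_Icc {f : ℕ → ℝ} {A B : ℝ} (h : ∀ n, f n ∈ Set.Icc A B) :
    Tendsto f (hyperfilter ℕ : Filter ℕ) (𝓝 (limUnder (hyperfilter ℕ : Filter ℕ) f)) := by
  obtain ⟨l, -, hl⟩ := isCompact_Icc.ultrafilter_le_nhds ((hyperfilter ℕ).map f)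
    (le_principal_iff.2 (mem_map.2 (univ_mem' h)))
  exact tendsto_nhds_limUnder ⟨l, hl⟩

lemma iterLim_mem {P : IWParams} {y : ℕ → c00} (hy : ∀ n, iwNorm P (y n) ≤ 1) :
    ∀ (m : ℕ) (a : Fin m → ℝ) (u : c00),
      iterLim P y m a u ∈ Set.Icc 0 (iwNorm P u + ∑ i, |a i|) := by
  intro m
  induction m with
  | zero => intro a u; simp [iterLim, iwNorm_nonneg]
  | succ m ih =>
    intro a u
    have hmem : ∀ n, iterLim P y m (Fin.tail a) (u + a 0 • y n) ∈
        Set.Icc 0 (iwNorm P u + ∑ i, |a i|) := by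
      intro n
      refine ⟨(ih _ _).1, (ih _ _).2.trans ?_⟩
      rw [sum_fin_tail a fun r => |r|]
      linarith [iwNorm_add_smul_le hy u (a 0) n]
    have ht := tendsto_limUnder_of_mem_Icc hmem
    exact isClosed_Icc.mem_of_tendsto ht (Eventually.of_forall hmem)

lemma tendsto_iterLim {P : IWParams} {y : ℕ → c00} (hy : ∀ n, iwNorm P (y n) ≤ 1) (m : ℕ)
    (a : Fin (m + 1) → ℝ) (u : c00) :
    Tendsto (fun n => iterLim P y m (Fin.tail a) (u + a 0 • y n)) (hyperfilter ℕ : Filter ℕ)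
      (𝓝 (iterLim P y (m + 1) a u)) := by
  refine tendsto_limUnder_of_mem_Icc (A := 0) (B := iwNorm P u + ∑ i, |a i|) fun n => ?_
  refine ⟨(iterLim_mem hy _ _ _).1, (iterLim_mem hy _ _ _).2.trans ?_⟩
  rw [sum_fin_tail a fun r => |r|]
  linarith [iwNorm_add_smul_le hy u (a 0) n]

lemma abs_iterLim_sub_le {P : IWParams} {y : ℕ → c00} (hy : ∀ n, iwNorm P (y n) ≤ 1) :
    ∀ (m : ℕ) (a b : Fin m → ℝ) (u v : c00),
      |iterLim P y m a u - iterLim P y m b v| ≤ iwNorm P (u - v) + ∑ i, |a i - b i| := by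
  intro m
  induction m with
  | zero => intro a b u v; simpa [iterLim] using abs_iwNorm_sub_le P u v
  | succ m ih =>
    intro a b u v
    refine le_of_tendsto ((tendsto_iterLim hy m a u).sub (tendsto_iterLim hy m b v)).abs
      (Eventually.of_forall fun n => (ih _ _ _ _).trans ?_)
    have h1 : u + a 0 • y n - (v + b 0 • y n) = (u - v) + (a 0 - b 0) • y n := by
      rw [sub_smul]; abel
    have h2 : ∑ i, |a i - b i| = |a 0 - b 0| + ∑ i, |Fin.tail a i - Fin.tail b i| := by
      rw [Fin.sum_univ_succ]; rfl
    rw [h1, h2]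
    linarith [iwNorm_add_smul_le hy (u - v) (a 0 - b 0) n]

/-- A partially evaluated combination: the vector reached so far together with the coefficients
still to be used. -/
abbrev PartialComb : Type := Σ m : ℕ, (Fin m → ℝ) × c00

/-- Adding the next coefficient times `y n` to a partially evaluated combination. -/
noncomputable def PartialComb.step (y : ℕ → c00) (n : ℕ) : PartialComb → PartialComb
  | ⟨0, s⟩ => ⟨0, s⟩
  | ⟨m + 1, a, u⟩ => ⟨m, Fin.tail a, u + a 0 • y n⟩

/-- The iterated limit associated with a partially evaluated combination. -/
noncomputable def PartialComb.val (P : IWParams) (y : ℕ → c00) (s : PartialComb) : ℝ :=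
  iterLim P y s.1 s.2.1 s.2.2

lemma PartialComb.tendsto_val {P : IWParams} {y : ℕ → c00} (hy : ∀ n, iwNorm P (y n) ≤ 1)
    (s : PartialComb) :
    Tendsto (fun n => (s.step y n).val P y) (hyperfilter ℕ : Filter ℕ) (𝓝 (s.val P y)) := by
  rcases s with ⟨_ | m, a, u⟩
  · exact tendsto_const_nhds
  · exact tendsto_iterLim hy m a u

lemma PartialComb.exists_step {P : IWParams} {y : ℕ → c00} (hy : ∀ n, iwNorm P (y n) ≤ 1)
    (D : Finset PartialComb) (n₀ t : ℕ) :
    ∃ n > n₀, ∀ s ∈ D, |(s.step y n).val P y - s.val P y| < (1 / 2 : ℝ) ^ t := by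
  have h1 : ∀ᶠ n in (hyperfilter ℕ : Filter ℕ),
      ∀ s ∈ D, |(s.step y n).val P y - s.val P y| < (1 / 2 : ℝ) ^ t := by
    rw [eventually_all_finset]
    intro s _
    have := Metric.tendsto_nhds.1 (s.tendsto_val hy) ((1 / 2 : ℝ) ^ t) (by positivity)
    simpa only [Real.dist_eq] using this
  have h2 : ∀ᶠ n in (hyperfilter ℕ : Filter ℕ), n₀ < n :=
    Nat.hyperfilter_le_atTop (eventually_gt_atTop n₀)
  exact (h2.and h1).exists

/-- Every sequence in the unit ball has a subsequence generating a spreading model. The subsequence is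
chosen so that its `t`-th term replaces one of the iterated limits up to an error `2⁻ᵗ`,
simultaneously for the finitely many combinations of the earlier terms and the first `t` tuples
of rational coefficients. -/
lemma exists_spreadingModel {P : IWParams} {y : ℕ → c00} (hy : ∀ n, iwNorm P (y n) ≤ 1) :
    ∃ φ : ℕ → ℕ, StrictMono φ ∧ ∃ ν, GeneratesSMwith (iwNorm P) (y ∘ φ) ν := by
  classical
  obtain ⟨E, hE⟩ := exists_surjective_nat (Σ m : ℕ, (Fin m → ℚ))
  set e : ℕ → PartialComb := fun t => ⟨(E t).1, fun i => ((E t).2 i : ℝ), 0⟩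
  choose nxt hnxt hnxt' using PartialComb.exists_step hy
  let R : ℕ → Finset PartialComb × ℕ := fun t => Nat.rec (∅, 0) (fun t S =>
    (insert (e t) (S.1 ∪ S.1.image (PartialComb.step y (nxt S.1 S.2 t))), nxt S.1 S.2 t)) t
  have hR : ∀ t, R (t + 1) = (insert (e t) ((R t).1 ∪ (R t).1.image
      (PartialComb.step y (nxt (R t).1 (R t).2 t))), nxt (R t).1 (R t).2 t) := fun t => rfl
  set φ : ℕ → ℕ := fun t => (R (t + 1)).2 with hφ
  set D : ℕ → Finset PartialComb := fun t => (R t).1 with hD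
  have hφe : ∀ t, φ t = nxt (D t) (R t).2 t := fun t => by simp only [hφ, hR, hD]
  have hDe : ∀ t, D (t + 1) = insert (e t) (D t ∪ (D t).image (PartialComb.step y (φ t))) :=
    fun t => by simp only [hφ, hR, hD]
  have hmono : StrictMono φ := strictMono_nat_of_lt_succ fun t => by
    rw [hφe (t + 1)]
    exact hnxt _ _ _
  have hDmono : Monotone D := monotone_nat_of_le_succ fun t => by
    rw [hDe]
    exact Finset.subset_union_left.trans (Finset.subset_insert _ _)
  have herr : ∀ t, ∀ s ∈ D t, |(s.step y (φ t)).val P y - s.val P y| < (1 / 2 : ℝ) ^ t := by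
    intro t s hs
    rw [hφe]
    exact hnxt' _ _ _ s hs
  have hmain : ∀ (m : ℕ) (a : Fin m → ℝ) (u : c00) (T : ℕ), (⟨m, a, u⟩ : PartialComb) ∈ D T →
      ∀ j : Fin m → ℕ, StrictMono j → (∀ i, T ≤ j i) →
        |iwNorm P (u + ∑ i, a i • y (φ (j i))) - iterLim P y m a u| ≤ m * (1 / 2 : ℝ) ^ T := by
    intro m
    induction m with
    | zero => intro a u T _ j _ _; simp [iterLim]
    | succ m ih =>
      intro a u T hs j hj hT
      have hs0 : (⟨m + 1, a, u⟩ : PartialComb) ∈ D (j 0) := hDmono (hT 0) hs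
      have hs1 : (⟨m, Fin.tail a, u + a 0 • y (φ (j 0))⟩ : PartialComb) ∈ D (j 0 + 1) := by
        rw [hDe]
        exact Finset.mem_insert_of_mem (Finset.mem_union_right _ (Finset.mem_image_of_mem
          (PartialComb.step y (φ (j 0))) hs0))
      have h1 := ih (Fin.tail a) _ (j 0 + 1) hs1 (Fin.tail j)
        (fun p q h => hj (Fin.succ_lt_succ_iff.2 h)) (fun i => hj (Fin.succ_pos i))
      have h2 : |iterLim P y m (Fin.tail a) (u + a 0 • y (φ (j 0))) - iterLim P y (m + 1) a u| <
          (1 / 2 : ℝ) ^ (j 0) := herr (j 0) _ hs0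
      have h3 : u + ∑ i, a i • y (φ (j i)) =
          u + a 0 • y (φ (j 0)) + ∑ i, Fin.tail a i • y (φ (Fin.tail j i)) := by
        rw [Fin.sum_univ_succ, ← add_assoc]; rfl
      have h4 : (1 / 2 : ℝ) ^ (j 0) ≤ (1 / 2 : ℝ) ^ T :=
        pow_le_pow_of_le_one (by norm_num) (by norm_num) (hT 0)
      have h5 : (m : ℝ) * (1 / 2 : ℝ) ^ (j 0 + 1) ≤ m * (1 / 2 : ℝ) ^ T := by
        gcongr ?_ * ?_
        exact pow_le_pow_of_le_one (by norm_num) (by norm_num) ((hT 0).trans (Nat.le_succ _))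
      rw [h3]
      have h6 := abs_le.1 h1
      have h7 := abs_lt.1 h2
      push_cast
      rw [abs_le]
      constructor <;> linarith [h6.1, h6.2, h7.1, h7.2]
  refine ⟨φ, hmono, fun m a => iterLim P y m a 0, ?_⟩
  intro m a ε hε
  have hδ : 0 < ε / (4 * (m + 1)) := by positivity
  choose b hb using fun i => exists_rat_near (a i) hδ
  obtain ⟨k, hk⟩ := hE ⟨m, b⟩
  have hsum : ∑ i, |a i - b i| ≤ ε / 4 := by
    calc ∑ i, |a i - b i| ≤ ∑ _i : Fin m, ε / (4 * (m + 1)) :=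
          Finset.sum_le_sum fun i _ => (hb i).le
      _ = m * (ε / (4 * (m + 1))) := by simp
      _ ≤ (m + 1) * (ε / (4 * (m + 1))) := by gcongr; linarith
      _ = ε / 4 := by field_simp
  obtain ⟨T₀, hT₀⟩ := exists_pow_lt_of_lt_one hδ (by norm_num : (1 / 2 : ℝ) < 1)
  refine ⟨max T₀ (k + 1), fun j hj hjT => ?_⟩
  have hmem : (⟨m, fun i => (b i : ℝ), 0⟩ : PartialComb) ∈ D (max T₀ (k + 1)) := by
    refine hDmono (le_max_right _ _) ?_
    rw [hDe]
    have : e k = ⟨m, fun i => (b i : ℝ), 0⟩ :=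
      congrArg (fun r : Σ m : ℕ, (Fin m → ℚ) => (⟨r.1, fun i => (r.2 i : ℝ), 0⟩ : PartialComb)) hk
    rw [← this]
    exact Finset.mem_insert_self _ _
  have h1 := hmain m _ 0 _ hmem j hj hjT
  have h2 : (m : ℝ) * (1 / 2 : ℝ) ^ (max T₀ (k + 1)) ≤ ε / 4 := by
    calc (m : ℝ) * (1 / 2 : ℝ) ^ (max T₀ (k + 1)) ≤ (m + 1) * (ε / (4 * (m + 1))) := by
          gcongr
          · linarith
          · exact (pow_le_pow_of_le_one (by norm_num) (by norm_num) (le_max_left _ _)).trans hT₀.le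
      _ = ε / 4 := by field_simp
  have h3 : |iwNorm P (∑ i, a i • (y ∘ φ) (j i)) - iwNorm P (0 + ∑ i, (b i : ℝ) • y (φ (j i)))| ≤
      ε / 4 := by
    refine (abs_iwNorm_sub_le P _ _).trans ?_
    have h4 : (∑ i, a i • (y ∘ φ) (j i)) - (0 + ∑ i, (b i : ℝ) • y (φ (j i))) =
        ∑ i, (a i - b i) • y (φ (j i)) := by
      rw [zero_add, ← Finset.sum_sub_distrib]
      simp only [sub_smul, Function.comp]
    rw [h4]
    refine ((iwNorm_sum_smul_le P _ _ _).trans ?_).trans hsum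
    exact Finset.sum_le_sum fun i _ => mul_le_of_le_one_right (abs_nonneg _) (hy _)
  have h5 : |iterLim P y m a 0 - iterLim P y m (fun i => (b i : ℝ)) 0| ≤ ε / 4 := by
    refine (abs_iterLim_sub_le hy m _ _ 0 0).trans ?_
    have h6 : iwNorm P ((0 : c00) - 0) ≤ 0 := by
      have := iwNorm_smul_le P 0 (0 : c00)
      simpa using this
    linarith
  have h6 := abs_le.1 h1
  have h7 := abs_le.1 h3
  have h8 := abs_le.1 h5
  rw [abs_lt]
  constructor <;> linarith [h6.1, h6.2, h7.1, h7.2, h8.1, h8.2]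

/-- A spreading model of a sequence satisfying the lower estimates on an infinite set is
4-equivalent to the basis of `ℓ₁`: by the case `j₀ = 0`, where `m 0 = 2` and `n 0 = 1`, far out
combinations have norm at least a quarter of the sum of the moduli of the coefficients. -/
lemma normFamEquiv_of_lower {P : IWParams} {x : ℕ → c00} (hx : IsNormBlockSeq (iwNorm P) x)
    {L : Set ℕ}
    (hL : ∀ F : Finset ℕ, ↑F ⊆ L → (F.image fun i => minSupp (x i)) ∈ Schreier (P.n 0) →
      ∀ c : ℕ → ℝ, (1 / (2 * (P.m 0 : ℝ))) * ∑ i ∈ F, |c i| ≤ iwNorm P (∑ i ∈ F, c i • x i))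
    {ψ : ℕ → ℕ} (hψ : StrictMono ψ) (hψL : ∀ t, ψ t ∈ L) {ν : ∀ m : ℕ, (Fin m → ℝ) → ℝ}
    (hν : GeneratesSMwith (iwNorm P) (x ∘ ψ) ν) : NormFamEquiv 4 l1Norm ν := by
  classical
  refine ⟨4, 1, by norm_num, by norm_num, by norm_num, fun m a => ?_⟩
  have key : ∀ ε > (0 : ℝ), ∃ r : ℝ, |r - ν m a| < ε ∧ 1 / 4 * l1Norm m a ≤ r ∧
      r ≤ l1Norm m a := by
    intro ε hε
    obtain ⟨N, hN⟩ := hν m a ε hε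
    set j : Fin m → ℕ := fun i => max N m + i with hj
    have hjm : StrictMono j := fun p q h => Nat.add_lt_add_left (Fin.lt_def.1 h) _
    refine ⟨_, hN j hjm fun i => (le_max_left _ _).trans (Nat.le_add_right _ _), ?_, ?_⟩
    · set J : Fin m → ℕ := fun i => ψ (j i) with hJ
      have hJi : Function.Injective J := (hψ.comp hjm).injective
      have h1 := hL (Finset.univ.image J) (by
          intro i hi
          obtain ⟨q, -, rfl⟩ := Finset.mem_image.1 (Finset.mem_coe.1 hi)
          exact hψL _) (by
          rw [P.n_first]
          refine schreier_one_of_card_le _ fun k hk => ?_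
          obtain ⟨i, hi, rfl⟩ := Finset.mem_image.1 hk
          obtain ⟨q, -, rfl⟩ := Finset.mem_image.1 hi
          have hc1 : (Finset.image (fun i => minSupp (x i)) (Finset.image J Finset.univ)).card ≤
              m := Finset.card_image_le.trans (Finset.card_image_le.trans (by simp))
          have hc2 : m ≤ j q := (le_max_right N m).trans (Nat.le_add_right _ _)
          exact hc1.trans (hc2.trans ((hψ.id_le _).trans (le_minSupp hx.1 hx.2.1 _))))
        (Function.extend J a 0)
      rw [Finset.sum_image hJi.injOn, Finset.sum_image hJi.injOn, P.m_first] at h1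
      simp only [hJi.extend_apply] at h1
      refine le_trans (le_of_eq ?_) h1
      norm_num [l1Norm]
    · refine (iwNorm_sum_smul_le P _ _ _).trans (le_of_eq ?_)
      simp [l1Norm, hx.2.2]
  constructor
  · refine le_of_forall_pos_le_add fun ε hε => ?_
    obtain ⟨r, h1, h2, -⟩ := key ε hε
    linarith [(abs_lt.1 h1).2]
  · refine le_of_forall_pos_le_add fun ε hε => ?_
    obtain ⟨r, h1, -, h2⟩ := key ε hε
    linarith [(abs_lt.1 h1).1]

/-- Every normalized block sequence `x` in `X_iw` admits an infinite set
`L ⊆ ℕ` so that for every `j₀`, every `F ⊆ L` with `(x_i)_{i ∈ F}` being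
`S_{n_{j₀}}`-admissible and all scalars `(c_i)`, `‖∑_{i∈F} c_i x_i‖ ≥ (1/(2 m_{j₀})) ∑ |c_i|`.
In particular, `x` has a subsequence generating a spreading model 4-equivalent to the
unit vector basis of ℓ₁. -/
theorem statement5 (P : IWParams) (x : ℕ → c00) (hx : IsNormBlockSeq (iwNorm P) x) :
    (∃ L : Set ℕ, L.Infinite ∧
      ∀ j0 : ℕ, ∀ F : Finset ℕ, ↑F ⊆ L →
        (F.image fun i => minSupp (x i)) ∈ Schreier (P.n j0) →
        ∀ c : ℕ → ℝ,
          (1 / (2 * (P.m j0 : ℝ))) * ∑ i ∈ F, |c i| ≤ iwNorm P (∑ i ∈ F, c i • x i)) ∧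
    ∃ φ : ℕ → ℕ, StrictMono φ ∧
      ∃ ν, GeneratesSMwith (iwNorm P) (x ∘ φ) ν ∧ NormFamEquiv 4 l1Norm ν := by
  obtain ⟨L, hLinf, hL⟩ := exists_lower P x hx
  refine ⟨⟨L, hLinf, hL⟩, ?_⟩
  obtain ⟨φ, hφ, ν, hν⟩ := exists_spreadingModel (P := P) (y := fun t => x (Nat.nth (· ∈ L) t))
    (fun n => (hx.2.2 _).le)
  have hmono : StrictMono fun t => Nat.nth (· ∈ L) (φ t) := (Nat.nth_strictMono hLinf).comp hφ
  exact ⟨fun t => Nat.nth (· ∈ L) (φ t), hmono, ν, hν,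
    normFamEquiv_of_lower hx (hL 0) hmono (fun t => Nat.nth_mem_of_infinite hLinf _) hν⟩
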